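/- There exists an absolute constant c > 0 such that for every natural number n ≥ 2 there is a constant C > 0 with the following property: for every finite field F, writing q = |F| and G = SL_n(F), the number of ordered pairs (x₁, x₂) ∈ G × G such that {x₁, x₂} invariably generates G is at least (c/n − C/q) · |G|². -/

import Mathlib

/-- `{x, y}` invariably generates `G`: for all `g, h`, the conjugates
`g * x * g⁻¹` and `h * y * h⁻¹` generate `G`. -/
def InvGen {G : Type*} [Group G] (x y : G) : Prop :=
  ∀ g h : G, Subgroup.closure {g * x * g⁻¹, h * y * h⁻¹} = ⊤

/-!
Let `L / F` be the extension of degree `n`. The first element is multiplication by an `l : L` of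
norm `1` such that `Fˣ ⟨l⟩` is almost all of `Lˣ` on the logarithmic scale; since a cyclic group has
few elements of small order, such elements and their conjugates have density at least `1 / (4 n)`.
The second is an `x` that has an eigenvector over `F` and for which `x ^ n!` is cyclic. The first
property has probability at least `1 / 2`, by Burnside's lemma and the Cauchy-Schwarz inequality for
the doubly transitive action on projective space, and the second fails with probability `O(1 / q)`.

Suppose that `H` contains both. The polynomials of degree at most `D` vanishing on `Fˣ H` define a
closed set over an algebraic closure `K`. By the Schwartz-Zippel lemma on `Fˣ ⟨l⟩`, multiplication
by the torus `L ⊗ K` preserves it; in the basis of embeddings `L → K` this torus is diagonal. The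
stabiliser of the closed set is therefore a monoid that contains all diagonal matrices, is closed
under limits of curves and is Galois stable. Its root subgroups define an equivalence relation on
the embeddings, whose classes `x` permutes and `x ^ n!` preserves. The coordinates of an eigenvector
of `x` over `F` are all nonzero, because embeddings are injective, and as `x ^ n!` is cyclic its
eigenspaces are lines: hence there is a single class, and the stabiliser is everything. So no
nonzero polynomial of degree at most `D` vanishes on `Fˣ H`, which makes `H` so large that
its index is at most `q ^ (1 / 4)`, and this forces `H = SL(n, F)`.
-/

open Matrix

lemma exists_add_one_pow_le_mul_two_pow (k : ℕ) :
    ∃ c : ℕ, 1 ≤ c ∧ ∀ a : ℕ, (a + 1) ^ k ≤ c * 2 ^ a := by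
  obtain ⟨B, hB⟩ :=
    (tendsto_pow_const_div_const_pow_of_one_lt k (one_lt_two (α := ℝ))).bddAbove_range
  refine ⟨⌈2 * B⌉₊ + 1, by omega, fun a => ?_⟩
  have hle : ((a + 1 : ℕ) : ℝ) ^ k / 2 ^ (a + 1) ≤ B := hB ⟨a + 1, rfl⟩
  rw [div_le_iff₀ (by positivity)] at hle
  have hceil : 2 * B ≤ ⌈2 * B⌉₊ + 1 := (Nat.le_ceil _).trans (by linarith)
  suffices (((a + 1) ^ k : ℕ) : ℝ) ≤ (((⌈2 * B⌉₊ + 1) * 2 ^ a : ℕ) : ℝ) by exact_mod_cast this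
  calc (((a + 1) ^ k : ℕ) : ℝ) ≤ B * 2 ^ (a + 1) := mod_cast hle
    _ = 2 * B * 2 ^ a := by ring
    _ ≤ (⌈2 * B⌉₊ + 1) * 2 ^ a := by gcongr
    _ = (((⌈2 * B⌉₊ + 1) * 2 ^ a : ℕ) : ℝ) := by push_cast; ring

lemma exists_card_divisors_pow_le (k : ℕ) :
    ∃ C : ℕ, ∀ m : ℕ, m ≠ 0 → m.divisors.card ^ k ≤ C * m := by
  obtain ⟨c, hc_one, hc⟩ := exists_add_one_pow_le_mul_two_pow k
  refine ⟨c ^ 2 ^ k, fun m hm => ?_⟩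
  -- The prime `p` contributes a constant factor if `p < 2 ^ k`, and no factor otherwise.
  have hprime : ∀ p ∈ m.primeFactors, (m.factorization p + 1) ^ k ≤
      (if p < 2 ^ k then c else 1) * p ^ m.factorization p := by
    intro p hp
    have hp_two : 2 ≤ p := (Nat.prime_of_mem_primeFactors hp).two_le
    split_ifs with hlt
    · exact (hc _).trans (by gcongr)
    · calc (m.factorization p + 1) ^ k ≤ (2 ^ m.factorization p) ^ k := by
            gcongr; exact Nat.lt_two_pow_self
        _ = (2 ^ k) ^ m.factorization p := pow_right_comm _ _ _
        _ ≤ 1 * p ^ m.factorization p := by rw [one_mul]; gcongr; exact not_lt.1 hlt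
  have hcard : {p ∈ m.primeFactors | p < 2 ^ k}.card ≤ 2 ^ k := by
    calc _ ≤ (Finset.range (2 ^ k)).card :=
          Finset.card_le_card fun p hp => Finset.mem_range.2 (Finset.mem_filter.1 hp).2
      _ = 2 ^ k := Finset.card_range _
  calc m.divisors.card ^ k = ∏ p ∈ m.primeFactors, (m.factorization p + 1) ^ k := by
        rw [Nat.card_divisors hm, Finset.prod_pow]
    _ ≤ ∏ p ∈ m.primeFactors, ((if p < 2 ^ k then c else 1) * p ^ m.factorization p) :=
        Finset.prod_le_prod' hprime
    _ = c ^ {p ∈ m.primeFactors | p < 2 ^ k}.card * m := by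
        rw [Finset.prod_mul_distrib, ← Finset.prod_filter, Finset.prod_const,
          ← Nat.prod_factorization_eq_prod_primeFactors, Nat.prod_factorization_pow_eq_self hm]
    _ ≤ c ^ 2 ^ k * m := by gcongr

lemma card_le_mul_card_of_fiber_card_le {α β γ : Type*} [Finite β] (f : α → β) (g : α → γ)
    (s : β → Finset γ) {k : ℕ} (hs : ∀ b, (s b).card ≤ k) (hg : ∀ a, g a ∈ s (f a))
    (hinj : ∀ a a', f a = f a' → g a = g a' → a = a') : Nat.card α ≤ k * Nat.card β := by
  have := Fintype.ofFinite β
  have hφ : Function.Injective fun a => (⟨f a, g a, hg a⟩ : Σ b, s b) := by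
    intro a a' h
    have hf : f a = f a' := congrArg Sigma.fst h
    have hgg : g a = g a' := congrArg (fun x : Σ b, s b => (x.2 : γ)) h
    exact hinj a a' hf hgg
  calc Nat.card α ≤ Nat.card (Σ b, s b) := Nat.card_le_card_of_injective _ hφ
    _ = ∑ b, (s b).card := by simp
    _ ≤ ∑ _b : β, k := Finset.sum_le_sum fun b _ => hs b
    _ = k * Nat.card β := by simp [mul_comm]

lemma subring_eq_top_of_card_lt_sq {F : Type*} [Field F] [Finite F] (B : Subring F)
    (h : Nat.card F < Nat.card B ^ 2) : B = ⊤ := by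
  classical
  have := Fintype.ofFinite B
  let : Field B := Fintype.fieldOfDomain B
  have hpow : Nat.card F = Nat.card B ^ Module.finrank B F := Module.natCard_eq_pow_finrank
  have hrank : Module.finrank B F = 1 := by
    rw [hpow, Nat.pow_lt_pow_iff_right Finite.one_lt_card] at h
    have := Module.finrank_pos (R := B) (M := F)
    omega
  rw [hrank, pow_one] at hpow
  refine SetLike.coe_injective (Set.eq_of_subset_of_ncard_le (Set.subset_univ _) ?_)
  rw [Subring.coe_top, Set.ncard_univ, hpow, ← Nat.card_coe_set_eq]
  rfl

lemma card_le_card_comap_mul_index {A G : Type*} [Group A] [Group G] (φ : A →* G)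
    (H : Subgroup G) [H.FiniteIndex] : Nat.card A ≤ Nat.card (H.comap φ) * H.index := by
  rw [← Subgroup.card_mul_index (H.comap φ), Subgroup.index_comap]
  gcongr
  rw [← Subgroup.relIndex_top_right H]
  exact Subgroup.relIndex_le_of_le_right le_top
    (by simpa using Subgroup.FiniteIndex.index_ne_zero)

section SmallIndex

open Matrix.SpecialLinearGroup

variable {ι F : Type*} [Fintype ι] [DecidableEq ι] [Field F] {i j : ι}

/-- The cocharacter of `SL(ι, F)` at the pair `(i, j)`: the homomorphism sending `t` to the diagonal
matrix with entry `t` at `i`, entry `t⁻¹` at `j` and all other entries `1`. -/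
noncomputable def torusHom (hij : i ≠ j) : Fˣ →* SpecialLinearGroup ι F where
  toFun t := diag2n hij (t : F) t.ne_zero
  map_one' := Subtype.ext <| by simp [diag2n_coe]
  map_mul' s t := Subtype.ext <| by
    rw [coe_mul]
    simp only [diag2n_coe, diagonal_mul_diagonal]
    congr 1
    ext k
    split_ifs <;> simp [mul_comm]

/-- The root subgroup of `SL(ι, F)` at the pair `(i, j)`, parametrised by the additive group
of `F`. -/
noncomputable def transvectionHom (hij : i ≠ j) : Multiplicative F →* SpecialLinearGroup ι F where
  toFun a := transvection hij a.toAdd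
  map_one' := by simp
  map_mul' a b := transvection_add hij _ _

lemma torusHom_mul_transvection_mul_inv (hij : i ≠ j) (t : Fˣ) (a : F) :
    torusHom hij t * transvection hij a * (torusHom hij t)⁻¹ = transvection hij (t ^ 2 * a) := by
  rw [mul_inv_eq_iff_eq_mul]
  refine Subtype.ext <| Matrix.ext fun x y => ?_
  change (diag2n hij (t : F) t.ne_zero * transvection hij a).1 x y =
    (transvection hij (t ^ 2 * a : F) * diag2n hij (t : F) t.ne_zero).1 x y
  simp only [coe_mul, diag2n_coe, transvection_coe, diagonal_mul, mul_diagonal, Matrix.add_apply,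
    Matrix.one_apply, single_apply]
  have := t.ne_zero
  grind

lemma diag2n_eq_prod_transvection (hij : i ≠ j) {a : F} (ha : a ≠ 0) :
    diag2n hij a ha = transvection hij a * transvection hij.symm (-a⁻¹) * transvection hij a *
      transvection hij (-1) * transvection hij.symm 1 * transvection hij (-1) := by
  refine Subtype.ext <| ?_
  simp only [coe_mul, transvection_coe, mul_add, add_mul, mul_one, one_mul, single_mul_single_same,
    single_mul_single_of_ne _ _ _ _ hij, single_mul_single_of_ne _ _ _ _ hij.symm, add_zero,
    diag2n_coe]
  ext x y
  simp only [diagonal_apply, Matrix.add_apply, Matrix.one_apply, single_apply]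
  grind

lemma eq_top_of_transvection_mem (H : Subgroup (SpecialLinearGroup ι F))
    (hH : ∀ (i j : ι) (hij : i ≠ j) (a : F), transvection hij a ∈ H) : H = ⊤ := by
  cases subsingleton_or_nontrivial ι
  · exact Subsingleton.elim _ _
  refine eq_top_iff.2 fun M _ => diagonal_transvection_induction' (· ∈ H) M ?_ hH
    fun _ _ => H.mul_mem
  intro i j hij c hc
  rw [diag2n_eq_prod_transvection]
  apply_rules [H.mul_mem]

/-- The subring of the elements of `R` that multiply the additive subgroup `A` into itself. -/
def multiplierSubring {R : Type*} [Ring R] (A : AddSubgroup R) : Subring R where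
  carrier := {b | ∀ a ∈ A, b * a ∈ A}
  mul_mem' hx hy a ha := by rw [mul_assoc]; exact hx _ (hy _ ha)
  one_mem' a ha := by rwa [one_mul]
  add_mem' hx hy a ha := by rw [add_mul]; exact A.add_mem (hx a ha) (hy a ha)
  zero_mem' a _ := by rw [zero_mul]; exact A.zero_mem
  neg_mem' hx a ha := by rw [neg_mul]; exact A.neg_mem (hx a ha)

lemma sq_mem_multiplierSubring_of_torusHom_mem (H : Subgroup (SpecialLinearGroup ι F)) (hij : i ≠ j)
    {t : Fˣ} (ht : torusHom hij t ∈ H) :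
    (t : F) ^ 2 ∈ multiplierSubring (Subgroup.toAddSubgroup' (H.comap (transvectionHom hij))) := by
  intro a ha
  change transvection hij (_ * a) ∈ H
  rw [← torusHom_mul_transvection_mul_inv]
  exact H.mul_mem (H.mul_mem ht ha) (H.inv_mem ht)

lemma card_comap_torusHom_le [Finite F] (H : Subgroup (SpecialLinearGroup ι F)) (hij : i ≠ j) :
    Nat.card (H.comap (torusHom hij)) ≤ 2 * Nat.card
      (multiplierSubring (Subgroup.toAddSubgroup' (H.comap (transvectionHom hij)))) := by
  classical
  refine card_le_mul_card_of_fiber_card_le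
    (fun t : H.comap (torusHom hij) =>
      ⟨(t.1 : F) ^ 2, sq_mem_multiplierSubring_of_torusHom_mem H hij t.2⟩)
    (fun t => (t.1 : F)) (fun b => Polynomial.nthRootsFinset 2 b.1) (fun b => ?_) (fun t => ?_)
    fun t t' _ h => Subtype.ext (Units.ext h)
  · exact (Multiset.toFinset_card_le _).trans (Polynomial.card_nthRoots _ _)
  · simp [Polynomial.mem_nthRootsFinset]

lemma lt_sq_of_sub_one_le {q b k : ℕ} (hq : 100 ≤ q) (hk : k ^ 4 ≤ q) (h : q - 1 ≤ 2 * b * k) :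
    q < b ^ 2 := by
  by_contra! hle
  obtain ⟨r, rfl⟩ : ∃ r, q = r + 1 := ⟨q - 1, by omega⟩
  have hupper : r ^ 4 ≤ 16 * (r + 1) ^ 3 :=
    calc r ^ 4 ≤ (2 * b * k) ^ 4 := Nat.pow_le_pow_left h 4
      _ = 16 * (b ^ 2) ^ 2 * k ^ 4 := by ring
      _ ≤ 16 * (r + 1) ^ 2 * (r + 1) := by gcongr
      _ = 16 * (r + 1) ^ 3 := by ring
  have hr : 99 ≤ r := by omega
  nlinarith [Nat.pow_le_pow_left hr 2, Nat.pow_le_pow_left hr 3]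

/-- A subgroup of small index meets a torus in enough elements `t` for the squares `t ^ 2` to
generate `F` as a ring, and it meets each root subgroup in a module over that ring. -/
lemma eq_top_of_index_pow_four_le [Finite F] (H : Subgroup (SpecialLinearGroup ι F))
    (hq : 100 ≤ Nat.card F) (hH : H.index ^ 4 ≤ Nat.card F) : H = ⊤ := by
  refine eq_top_of_transvection_mem H fun i j hij => ?_
  set A := Subgroup.toAddSubgroup' (H.comap (transvectionHom hij))
  have hA : Nat.card F ≤ Nat.card A * H.index :=
    card_le_card_comap_mul_index (transvectionHom (F := F) hij) H
  have hT : Nat.card F - 1 ≤ 2 * Nat.card (multiplierSubring A) * H.index := by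
    rw [← Nat.card_units]
    exact (card_le_card_comap_mul_index (torusHom hij) H).trans
      (Nat.mul_le_mul_right _ (card_comap_torusHom_le H hij))
  have htop : multiplierSubring A = ⊤ :=
    subring_eq_top_of_card_lt_sq _ (lt_sq_of_sub_one_le hq hH hT)
  have hA_one : 1 < Nat.card A := by
    by_contra! hle
    have hq_le : Nat.card F ^ 4 ≤ Nat.card F :=
      (Nat.pow_le_pow_left (by simpa using hA.trans (Nat.mul_le_mul_right _ hle)) 4).trans hH
    nlinarith [Nat.pow_le_pow_left hq 3]
  obtain ⟨⟨a, ha⟩, ha_ne⟩ := A.one_lt_card_iff_ne_bot.1 hA_one |> A.ne_bot_iff_exists_ne_zero.1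
  intro c
  have hc : c / a ∈ multiplierSubring A := htop ▸ Subring.mem_top _
  have hca := hc a ha
  rwa [div_mul_cancel₀ c (by simpa using ha_ne)] at hca

end SmallIndex

section RootRelation

open Polynomial

variable {ι K : Type*} [Fintype ι] [DecidableEq ι] [Field K]

/-- A monoid of matrices that contains every diagonal matrix, singular ones included, and is closed
under specialisation: together with the values at all `t ≠ 0` of a polynomial curve it contains the
value at `0`. -/
structure IsToricClosed (S : Submonoid (Matrix ι ι K)) : Prop where
  diagonal_mem : ∀ d : ι → K, diagonal d ∈ S
  eval_zero_mem : ∀ M : Matrix ι ι K[X],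
    (∀ t : K, t ≠ 0 → M.map (eval t) ∈ S) → M.map (eval 0) ∈ S

/-- The relation on indices saying that `S` contains the root subgroup at `(i, j)`. -/
def RootRel (S : Submonoid (Matrix ι ι K)) (i j : ι) : Prop :=
  ∀ c : K, Matrix.transvection i j c ∈ S

variable {S : Submonoid (Matrix ι ι K)} {g g' : Matrix ι ι K} {i j k : ι}

lemma IsToricClosed.rootRel_refl (hS : IsToricClosed S) (i : ι) : RootRel S i i := by
  intro c
  convert hS.diagonal_mem (1 + Pi.single i c) using 1
  rw [Matrix.transvection, ← diagonal_single, ← diagonal_one, diagonal_add]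
  rfl

lemma mul_transvection_self_mul_apply {R : Type*} [CommRing R] (g g' : Matrix ι ι R) (k : ι) (c : R)
    (x y : ι) :
    (g * Matrix.transvection k k c * g') x y = (g * g') x y + g x k * c * g' k y := by
  rw [Matrix.transvection, mul_add, add_mul, mul_one, Matrix.add_apply]
  congr 1
  simp [mul_apply, single_apply, ite_and]

/-- Write `E k l` for the elementary matrices and let `D t` be diagonal with entries `1` at `i`,
`t ^ 2` at `j` and `t` elsewhere. As `t → 0`, the curve
`D t * g * (1 + c t ^ 2 E k k) * g⁻¹ * D t⁻¹` converges to `1 + c (g i k) (g⁻¹ k j) E i j`. -/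
lemma IsToricClosed.rootRel_of_apply_ne_zero (hS : IsToricClosed S) (hg : g ∈ S) (hg' : g' ∈ S)
    (hgg' : g * g' = 1) (hi : g i k ≠ 0) (hj : g' k j ≠ 0) : RootRel S i j := by
  obtain rfl | hij := eq_or_ne i j
  · exact hS.rootRel_refl i
  intro c
  obtain ⟨r, rfl⟩ : ∃ r, g i k * r * g' k j = c := ⟨c / (g i k * g' k j), by field_simp⟩
  let weight (x : ι) : ℕ := if x = i then 0 else if x = j then 2 else 1
  let M : Matrix ι ι K[X] := of fun x y => C ((1 : Matrix ι ι K) x y) +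
    X ^ weight x * X ^ (2 - weight y) * C (g x k * r * g' k y)
  have hlimit : M.map (eval 0) = Matrix.transvection i j (g i k * r * g' k j) := by
    ext x y
    have hx : (0 : K) ^ weight x = if x = i then 1 else 0 := by
      by_cases hxi : x = i <;> by_cases hxj : x = j <;> simp [weight, hxi, hxj]
    have hy : (0 : K) ^ (2 - weight y) = if y = j then 1 else 0 := by
      by_cases hyi : y = i <;> by_cases hyj : y = j <;> simp_all [weight]
    simp only [M, map_apply, of_apply, eval_add, eval_C, eval_mul, eval_pow, eval_X, hx, hy,
      Matrix.transvection, Matrix.add_apply, single_apply]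
    grind
  rw [← hlimit]
  refine hS.eval_zero_mem M fun t ht => ?_
  have hcurve : M.map (eval t) = diagonal (fun x => t ^ weight x) *
      (g * Matrix.transvection k k (t ^ 2 * r) * g') * diagonal (fun y => (t ^ weight y)⁻¹) := by
    ext x y
    have hy : t ^ 2 * (t ^ weight y)⁻¹ = t ^ (2 - weight y) :=
      (pow_sub₀ t ht (by grind)).symm
    have hxy : t ^ weight x * (1 : Matrix ι ι K) x y * (t ^ weight y)⁻¹ =
        (1 : Matrix ι ι K) x y := by
      obtain rfl | hne := eq_or_ne x y
      · simp [ht]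
      · simp [hne]
    rw [mul_diagonal, diagonal_mul, mul_transvection_self_mul_apply, hgg', mul_add, add_mul, hxy]
    simp only [M, map_apply, of_apply, eval_add, eval_C, eval_mul, eval_pow, eval_X, ← hy]
    ring
  rw [hcurve]
  exact S.mul_mem (S.mul_mem (hS.diagonal_mem _)
    (S.mul_mem (S.mul_mem hg (hS.rootRel_refl k _)) hg')) (hS.diagonal_mem _)

lemma transvection_mul_transvection_neg {R : Type*} [CommRing R] (hij : i ≠ j) (c : R) :
    Matrix.transvection i j c * Matrix.transvection i j (-c) = 1 := by
  rw [transvection_mul_transvection_same _ _ hij, add_neg_cancel, transvection_zero]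

lemma IsToricClosed.rootRel_trans (hS : IsToricClosed S) (hij : RootRel S i j)
    (hjk : RootRel S j k) : RootRel S i k := by
  obtain rfl | hij' := eq_or_ne i j
  · exact hjk
  obtain rfl | hjk' := eq_or_ne j k
  · exact hij
  have hinv : Matrix.transvection i j 1 * Matrix.transvection j k 1 *
      (Matrix.transvection j k (-1) * Matrix.transvection i j (-1)) = (1 : Matrix ι ι K) := by
    rw [mul_assoc, ← mul_assoc (Matrix.transvection j k 1), transvection_mul_transvection_neg hjk',
      one_mul, transvection_mul_transvection_neg hij']
  refine hS.rootRel_of_apply_ne_zero (k := j) (S.mul_mem (hij 1) (hjk 1))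
    (S.mul_mem (hjk (-1)) (hij (-1))) hinv ?_ ?_ <;>
  simp [Matrix.transvection, mul_add, add_mul, hij', hjk', hjk'.symm, hij'.symm]

lemma symmetric_of_transitive_perm {α : Type*} [Finite α] {r : α → α → Prop} (hrefl : ∀ a, r a a)
    (htrans : ∀ a b c, r a b → r b c → r a c)
    (hperm : ∀ a b, ∃ π : Equiv.Perm α, π a = b ∧ ∀ x y, r x y → r (π x) (π y)) {a b : α}
    (hab : r a b) : r b a := by
  obtain ⟨π, rfl, hπ⟩ := hperm a b
  have hsub : {x | r (π a) x} ⊆ {x | r a x} := fun x hx => htrans _ _ _ hab hx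
  have hcard : {x | r a x}.ncard ≤ {x | r (π a) x}.ncard :=
    Set.ncard_le_ncard_of_injOn π (fun x hx => hπ _ _ hx) π.injective.injOn
  exact (Set.eq_of_subset_of_ncard_le hsub hcard).ge (hrefl a)

/-- The equivalence relation on indices whose classes are the blocks of `S`. -/
def IsToricClosed.rootSetoid (hS : IsToricClosed S)
    (hsymm : ∀ i j, RootRel S i j → RootRel S j i) : Setoid ι where
  r := RootRel S
  iseqv := ⟨hS.rootRel_refl, hsymm _ _, hS.rootRel_trans⟩

lemma exists_apply_ne_zero_of_mul_eq_one {R : Type*} [Semiring R] [Nontrivial R]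
    {g g' : Matrix ι ι R} (hgg' : g * g' = 1) (i : ι) : ∃ k, g i k ≠ 0 := by
  by_contra! hzero
  have hone := congrFun (congrFun hgg' i) i
  simp [mul_apply, hzero] at hone

lemma IsToricClosed.rootRel_of_column (hS : IsToricClosed S)
    (hsymm : ∀ i j, RootRel S i j → RootRel S j i) (hg : g ∈ S) (hg' : g' ∈ S) (hgg' : g * g' = 1)
    (hi : g i k ≠ 0) (hj : g j k ≠ 0) : RootRel S i j := by
  obtain ⟨l, hl⟩ := exists_apply_ne_zero_of_mul_eq_one (mul_eq_one_comm.1 hgg') k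
  exact hS.rootRel_trans (hS.rootRel_of_apply_ne_zero hg hg' hgg' hi hl)
    (hsymm _ _ (hS.rootRel_of_apply_ne_zero hg hg' hgg' hj hl))

lemma IsToricClosed.rootRel_of_rootRel_columns (hS : IsToricClosed S)
    (hsymm : ∀ i j, RootRel S i j → RootRel S j i) (hg : g ∈ S) (hg' : g' ∈ S) (hgg' : g * g' = 1)
    {l : ι} (hkl : RootRel S k l) (hi : g i k ≠ 0) (hj : g j l ≠ 0) : RootRel S i j := by
  obtain rfl | hkl' := eq_or_ne k l
  · exact hS.rootRel_of_column hsymm hg hg' hgg' hi hj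
  by_cases hjk : g j k = 0
  · by_cases hil : g i l = 0
    · have hinv : g * Matrix.transvection k l 1 * (Matrix.transvection k l (-1) * g') = 1 := by
        rw [mul_assoc, ← mul_assoc (Matrix.transvection k l 1),
          transvection_mul_transvection_neg hkl', one_mul, hgg']
      refine hS.rootRel_of_column (k := l) hsymm (S.mul_mem hg (hkl 1))
        (S.mul_mem (hkl (-1)) hg') hinv ?_ ?_
      · simpa [Matrix.transvection, mul_add, hil] using hi
      · simpa [Matrix.transvection, mul_add, hjk] using hj
    · exact hS.rootRel_of_column hsymm hg hg' hgg' hil hj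
  · exact hS.rootRel_of_column hsymm hg hg' hgg' hi hjk

lemma IsToricClosed.exists_perm_blocks (hS : IsToricClosed S)
    (hsymm : ∀ i j, RootRel S i j → RootRel S j i) (hg : g ∈ S) (hg' : g' ∈ S)
    (hgg' : g * g' = 1) : ∃ σ : Equiv.Perm (Quotient (hS.rootSetoid hsymm)),
      ∀ i k, g i k ≠ 0 → Quotient.mk _ i = σ (Quotient.mk _ k) := by
  have hcolumn (k : ι) : ∃ i, g i k ≠ 0 := by
    obtain ⟨i, hi⟩ := exists_apply_ne_zero_of_mul_eq_one (g := gᵀ) (g' := g'ᵀ)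
      (by rw [← transpose_mul, mul_eq_one_comm.1 hgg', transpose_one]) k
    exact ⟨i, hi⟩
  choose row hrow using hcolumn
  let p : Quotient (hS.rootSetoid hsymm) → Quotient (hS.rootSetoid hsymm) :=
    Quotient.map row fun k l hkl =>
      hS.rootRel_of_rootRel_columns hsymm hg hg' hgg' hkl (hrow k) (hrow l)
  have hp (i k : ι) (hik : g i k ≠ 0) : Quotient.mk _ i = p (Quotient.mk _ k) :=
    Quotient.sound (hS.rootRel_of_column hsymm hg hg' hgg' hik (hrow k))
  have hsurj : Function.Surjective p := by
    rintro ⟨i⟩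
    obtain ⟨k, hk⟩ := exists_apply_ne_zero_of_mul_eq_one hgg' i
    exact ⟨Quotient.mk _ k, (hp i k hk).symm⟩
  exact ⟨Equiv.ofBijective p (Finite.injective_iff_surjective.2 hsurj |> (⟨·, hsurj⟩)), hp⟩

lemma pow_apply_ne_zero_of_perm {R Q : Type*} [Semiring R] {g : Matrix ι ι R} (c : ι → Q)
    (σ : Equiv.Perm Q)
    (hσ : ∀ i k, g i k ≠ 0 → c i = σ (c k)) (m : ℕ) (h : (g ^ m) i k ≠ 0) :
    c i = (σ ^ m) (c k) := by
  induction m generalizing i with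
  | zero =>
    obtain rfl : i = k := by by_contra hne; simp [hne] at h
    rfl
  | succ m ih =>
    rw [pow_succ', mul_apply] at h
    obtain ⟨l, -, hl⟩ := Finset.exists_ne_zero_of_sum_ne_zero h
    rw [hσ i l (left_ne_zero_of_mul hl), ih (right_ne_zero_of_mul hl), pow_succ']
    rfl

lemma IsToricClosed.rootRel_of_pow_factorial_apply_ne_zero (hS : IsToricClosed S)
    (hsymm : ∀ i j, RootRel S i j → RootRel S j i) (hg : g ∈ S) (hg' : g' ∈ S)
    (hgg' : g * g' = 1) (h : (g ^ (Fintype.card ι).factorial) i k ≠ 0) : RootRel S i k := by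
  classical
  obtain ⟨σ, hσ⟩ := hS.exists_perm_blocks hsymm hg hg' hgg'
  have hdvd : orderOf σ ∣ (Fintype.card ι).factorial := by
    have hQ : Fintype.card (Quotient (hS.rootSetoid hsymm)) ≤ Fintype.card ι :=
      Fintype.card_quotient_le _
    refine (orderOf_dvd_card).trans ?_
    rw [Fintype.card_perm]
    exact Nat.factorial_dvd_factorial hQ
  have hik := pow_apply_ne_zero_of_perm _ σ hσ _ h
  rw [orderOf_dvd_iff_pow_eq_one.1 hdvd] at hik
  exact Quotient.exact hik

/-- The block of `i` is everything, because restricting `w` to it gives another eigenvector. -/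
lemma IsToricClosed.rootRel_of_eigenvector (hS : IsToricClosed S)
    (hsymm : ∀ i j, RootRel S i j → RootRel S j i) (hg : g ∈ S) (hg' : g' ∈ S)
    (hgg' : g * g' = 1) {w : ι → K} {μ : K} (hw : ∀ i, w i ≠ 0)
    (hμ : g ^ (Fintype.card ι).factorial *ᵥ w = μ • w)
    (hline : ∀ w', g ^ (Fintype.card ι).factorial *ᵥ w' = μ • w' → ∃ c : K, w' = c • w) (i j : ι) :
    RootRel S i j := by
  classical
  let w' : ι → K := fun k => if RootRel S i k then w k else 0
  have hblock (k l : ι) (hkl : (g ^ (Fintype.card ι).factorial) k l ≠ 0) :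
      RootRel S i k ↔ RootRel S i l := by
    have hrel := hS.rootRel_of_pow_factorial_apply_ne_zero hsymm hg hg' hgg' hkl
    exact ⟨fun h => hS.rootRel_trans h hrel, fun h => hS.rootRel_trans h (hsymm _ _ hrel)⟩
  have hw' : g ^ (Fintype.card ι).factorial *ᵥ w' = μ • w' := by
    ext k
    have hk : (g ^ (Fintype.card ι).factorial *ᵥ w') k =
        if RootRel S i k then (g ^ (Fintype.card ι).factorial *ᵥ w) k else 0 := by
      simp only [mulVec, dotProduct, w', mul_ite, mul_zero]
      split_ifs with hik
      · refine Finset.sum_congr rfl fun l _ => ?_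
        by_cases hkl : (g ^ (Fintype.card ι).factorial) k l = 0
        · simp [hkl]
        · rw [if_pos ((hblock k l hkl).1 hik)]
      · refine Finset.sum_eq_zero fun l _ => ?_
        by_cases hkl : (g ^ (Fintype.card ι).factorial) k l = 0
        · simp [hkl]
        · rw [if_neg (mt (hblock k l hkl).2 hik)]
    rw [hk, hμ]
    simp [w']
  obtain ⟨c, hc⟩ := hline w' hw'
  have hc_ne : c ≠ 0 := by
    rintro rfl
    have := congrFun hc i
    simp [w', hS.rootRel_refl i, hw i] at this
  by_contra hij
  have := congrFun hc j
  simp [w', hij, hc_ne, hw j] at this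

lemma IsToricClosed.eq_top_of_rootRel (hS : IsToricClosed S) (h : ∀ i j, RootRel S i j) :
    S = ⊤ :=
  eq_top_iff.2 fun M _ => Matrix.diagonal_transvection_induction (· ∈ S) M
    (fun _ _ => hS.diagonal_mem _) (fun t => h t.i t.j t.c) fun _ _ => S.mul_mem

lemma IsToricClosed.eq_top_of_eigenvector (hS : IsToricClosed S)
    (hperm : ∀ i j, ∃ π : Equiv.Perm ι, π i = j ∧
      ∀ a b, RootRel S a b → RootRel S (π a) (π b))
    (hg : g ∈ S) (hg' : g' ∈ S) (hgg' : g * g' = 1) {w : ι → K} {μ : K} (hw : ∀ i, w i ≠ 0)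
    (hμ : g ^ (Fintype.card ι).factorial *ᵥ w = μ • w)
    (hline : ∀ w', g ^ (Fintype.card ι).factorial *ᵥ w' = μ • w' → ∃ c : K, w' = c • w) :
    S = ⊤ :=
  hS.eq_top_of_rootRel <| hS.rootRel_of_eigenvector (fun _ _ => symmetric_of_transitive_perm
    hS.rootRel_refl (fun _ _ _ => hS.rootRel_trans) hperm) hg hg' hgg' hw hμ hline

end RootRelation

section DegreeClosure

open MvPolynomial

variable {σ τ F K : Type*} [Field K]

/-- The closure of a set of points for polynomials of bounded degree: the common zeros of all
polynomials of total degree at most `D` that vanish on `T`. -/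
def degreeClosure (D : ℕ) (T : Set (σ → K)) : Set (σ → K) :=
  {x | ∀ p : MvPolynomial σ K, p.totalDegree ≤ D → (∀ t ∈ T, eval t p = 0) → eval x p = 0}

variable {D : ℕ} {T : Set (σ → K)} {T' : Set (τ → K)}

lemma subset_degreeClosure : T ⊆ degreeClosure D T := fun _ ht _ _ hp => hp _ ht

lemma mapsTo_degreeClosure {φ : (σ → K) → τ → K}
    (hpull : ∀ p : MvPolynomial τ K, ∃ p' : MvPolynomial σ K,
      p'.totalDegree ≤ p.totalDegree ∧ ∀ x, eval x p' = 0 ↔ eval (φ x) p = 0)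
    (hT : Set.MapsTo φ T (degreeClosure D T')) :
    Set.MapsTo φ (degreeClosure D T) (degreeClosure D T') := by
  intro x hx p hp hvanish
  obtain ⟨p', hdeg, hp'⟩ := hpull p
  exact (hp' x).1 (hx p' (hdeg.trans hp) fun t ht => (hp' t).2 (hT ht p hp hvanish))

lemma totalDegree_bind₁_le {R : Type*} [CommSemiring R] {g : σ → MvPolynomial τ R}
    (hg : ∀ i, (g i).totalDegree ≤ 1) (p : MvPolynomial σ R) :
    (bind₁ g p).totalDegree ≤ p.totalDegree := by
  conv_lhs => rw [p.as_sum, map_sum]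
  refine totalDegree_finsetSum_le fun d hd => ?_
  rw [bind₁_monomial]
  calc (C (coeff d p) * ∏ i ∈ d.support, g i ^ d i).totalDegree
      ≤ ∑ i ∈ d.support, (g i ^ d i).totalDegree := by
        grw [totalDegree_mul, totalDegree_C, zero_add, totalDegree_finsetProd]
    _ ≤ ∑ i ∈ d.support, d i := Finset.sum_le_sum fun i _ => by
        grw [totalDegree_pow, hg i, mul_one]
    _ ≤ p.totalDegree := le_totalDegree hd

lemma mapsTo_degreeClosure_linearMap [Finite σ] (φ : (σ → K) →ₗ[K] τ → K)
    (hT : Set.MapsTo φ T (degreeClosure D T')) :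
    Set.MapsTo φ (degreeClosure D T) (degreeClosure D T') := by
  classical
  have := Fintype.ofFinite σ
  let g (j : τ) : MvPolynomial σ K := ∑ i, C (LinearMap.toMatrix' φ j i) * X i
  have hg (j : τ) : (g j).totalDegree ≤ 1 := totalDegree_finsetSum_le fun i _ => by
    grw [totalDegree_mul, totalDegree_C, totalDegree_X]
  refine mapsTo_degreeClosure (fun p => ⟨bind₁ g p, totalDegree_bind₁_le hg p, fun x => ?_⟩) hT
  have hx : (fun j => eval x (g j)) = φ x := by
    ext j
    rw [← LinearMap.toMatrix'_mulVec]
    simp [g, mulVec, dotProduct]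
  rw [← hx]
  exact iff_of_eq (congrArg (· = 0) (eval₂Hom_bind₁ _ _ _ _))

lemma mapsTo_degreeClosure_ringEquiv (f : K ≃+* K) (ρ : τ → σ)
    (hT : Set.MapsTo (fun x => f ∘ x ∘ ρ) T (degreeClosure D T')) :
    Set.MapsTo (fun x => f ∘ x ∘ ρ) (degreeClosure D T) (degreeClosure D T') := by
  refine mapsTo_degreeClosure (fun p => ⟨rename ρ (map f.symm.toRingHom p), ?_, fun x => ?_⟩) hT
  · exact (totalDegree_rename_le _ _).trans
      (Finset.sup_mono (support_map_subset _ _))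
  · rw [eval_rename, eval_map, ← map_eq_zero_iff f f.injective]
    have hcomp : f.toRingHom.comp f.symm.toRingHom = RingHom.id K := f.toRingHom_comp_symm_toRingHom
    have heval := eval₂_comp_left f.toRingHom f.symm.toRingHom (x ∘ ρ) p
    rw [hcomp] at heval
    exact iff_of_eq (congrArg (· = 0) heval)

lemma eval_zero_mem_degreeClosure [Infinite K] (γ : σ → Polynomial K)
    (hγ : ∀ t : K, t ≠ 0 → (fun i => (γ i).eval t) ∈ degreeClosure D T) :
    (fun i => (γ i).eval 0) ∈ degreeClosure D T := by
  intro p hp hvanish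
  have heval (t : K) : (aeval γ p).eval t = eval (fun i => (γ i).eval t) p := by
    have hcomp := eval₂_comp_left (Polynomial.evalRingHom t) Polynomial.C γ p
    rwa [show (Polynomial.evalRingHom t).comp Polynomial.C = RingHom.id K by ext; simp] at hcomp
  have hzero : aeval γ p = 0 := by
    refine Polynomial.eq_zero_of_infinite_isRoot _ ((Set.finite_singleton 0).infinite_compl.mono ?_)
    exact fun t ht => (heval t).trans (hγ t ht p hp hvanish)
  rw [← heval, hzero, Polynomial.eval_zero]

lemma card_zeros_mul_card_le_totalDegree_mul [Field F] [Finite F] [Algebra F K] [Fintype σ]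
    {p : MvPolynomial σ K} (hp : p ≠ 0) :
    {x : σ → F | eval (algebraMap F K ∘ x) p = 0}.ncard * Nat.card F ≤
      p.totalDegree * Nat.card F ^ Fintype.card σ := by
  classical
  have := Fintype.ofFinite F
  let e := Fintype.equivFin σ
  have hinj : Function.Injective (algebraMap F K) := (algebraMap F K).injective
  let S : Finset K := Finset.univ.image (algebraMap F K)
  have hS : S.card = Nat.card F := by
    rw [Finset.card_image_of_injective _ hinj, Finset.card_univ, Nat.card_eq_fintype_card]
  have hp' : rename e p ≠ 0 := (map_ne_zero_iff _ (rename_injective e e.injective)).2 hp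
  have hzippel := schwartz_zippel_totalDegree hp' S
  rw [div_le_div_iff₀ (by rw [hS]; exact_mod_cast pow_pos Nat.card_pos _)
    (by rw [hS]; exact_mod_cast Nat.card_pos), hS] at hzippel
  norm_cast at hzippel
  refine le_trans ?_ (hzippel.trans (Nat.mul_le_mul_right _ (totalDegree_rename_le _ _)))
  refine Nat.mul_le_mul_right _ ?_
  rw [← Set.ncard_coe_finset]
  refine Set.ncard_le_ncard_of_injOn (fun x => algebraMap F K ∘ x ∘ e.symm) (fun x hx => ?_) ?_
    (Finset.finite_toSet _)
  · rw [Set.mem_ofPred_eq] at hx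
    simp [S, eval_rename, Function.comp_assoc, hx]
  · intro x _ y _ hxy
    exact e.symm.surjective.injective_comp_right (hinj.comp_left hxy)

lemma degreeClosure_image_algebraMap_eq_univ [Field F] [Finite F] [Algebra F K] [Fintype σ]
    {A : Set (σ → F)} (hA : D * Nat.card F ^ Fintype.card σ < A.ncard * Nat.card F) :
    degreeClosure D ((algebraMap F K ∘ ·) '' A) = Set.univ := by
  refine Set.eq_univ_of_forall fun x p hp hvanish => ?_
  suffices p = 0 by rw [this, map_zero]
  by_contra hne
  have hsub : A.ncard ≤ {x : σ → F | eval (algebraMap F K ∘ x) p = 0}.ncard :=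
    Set.ncard_le_ncard fun a ha => hvanish _ (Set.mem_image_of_mem _ ha)
  refine hA.not_ge ?_
  grw [hsub, card_zeros_mul_card_le_totalDegree_mul hne, hp]

lemma finrank_restrictDegree [Fintype σ] (d : ℕ) :
    Module.finrank K (restrictDegree σ K d) = (d + 1) ^ Fintype.card σ := by
  rw [restrictDegree, Module.finrank_eq_nat_card_basis (basisRestrictSupport K _)]
  let e : {s : σ →₀ ℕ | ∀ i, s i ≤ d} ≃ (σ → Fin (d + 1)) :=
    { toFun s i := ⟨s.1 i, Nat.lt_succ_of_le (s.2 i)⟩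
      invFun s := ⟨Finsupp.equivFunOnFinite.symm fun i => s i, fun i => Nat.le_of_lt_succ (s i).2⟩
      left_inv _ := by ext; rfl
      right_inv _ := rfl }
  rw [Nat.card_congr e, Nat.card_fun, Nat.card_fin]
  simp

lemma add_one_pow_card_le_of_degreeClosure_eq_univ [Infinite K] [Fintype σ] {d : ℕ} (hT : T.Finite)
    (h : degreeClosure (Fintype.card σ * d) T = Set.univ) :
    (d + 1) ^ Fintype.card σ ≤ T.ncard := by
  have := hT.to_subtype
  have := Fintype.ofFinite T
  let Φ : restrictDegree σ K d →ₗ[K] T → K :=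
    LinearMap.pi (fun t => (aeval (R := K) t.1).toLinearMap) ∘ₗ Submodule.subtype _
  have hΦ : Function.Injective Φ := by
    rw [injective_iff_map_eq_zero]
    rintro ⟨p, hp⟩ hzero
    rw [mem_restrictDegree] at hp
    have hdeg : p.totalDegree ≤ Fintype.card σ * d := Finset.sup_le fun s hs => by
      rw [Finsupp.sum_fintype _ _ fun _ => rfl]
      exact Finset.sum_le_card_nsmul _ _ _ fun i _ => hp s hs i
    refine Subtype.ext (funext fun x => ?_)
    rw [Submodule.coe_zero, map_zero]
    exact Set.eq_univ_iff_forall.1 h x p hdeg fun t ht => congrFun hzero ⟨t, ht⟩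
  have := LinearMap.finrank_le_finrank_of_injective hΦ
  rwa [finrank_restrictDegree, Module.finrank_fintype_fun_eq_card, Set.fintypeCard_eq_ncard] at this

end DegreeClosure

section ClosureStabilizer

open Polynomial
open scoped Kronecker

variable {ι K : Type*} [Fintype ι] [DecidableEq ι] [Field K]

/-- The monoid of matrices whose right multiplication preserves the degree-`D` closure of the monoid
`T`. -/
def closureStabilizer (D : ℕ) (T : Submonoid (Matrix ι ι K)) : Submonoid (Matrix ι ι K) where
  carrier := {s | ∀ m : Matrix ι ι K,
    vec m ∈ degreeClosure D (vec '' (T : Set (Matrix ι ι K))) →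
      vec (m * s) ∈ degreeClosure D (vec '' (T : Set (Matrix ι ι K)))}
  one_mem' m hm := by rwa [mul_one]
  mul_mem' {s t} hs ht m hm := by rw [← mul_assoc]; exact ht _ (hs m hm)

variable {D : ℕ} {T : Submonoid (Matrix ι ι K)}

lemma le_closureStabilizer : T ≤ closureStabilizer D T := by
  intro t ht m hm
  have hvec (s : Matrix ι ι K) : mulVecLin (tᵀ ⊗ₖ (1 : Matrix ι ι K)) (vec s) = vec (s * t) := by
    rw [mulVecLin_apply, kronecker_mulVec_vec, one_mul, transpose_transpose]
  rw [← hvec]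
  refine mapsTo_degreeClosure_linearMap _ ?_ hm
  rintro _ ⟨s, hs, rfl⟩
  exact subset_degreeClosure ⟨s * t, T.mul_mem hs ht, (hvec s).symm⟩

lemma eval_zero_mem_closureStabilizer [Infinite K] (M : Matrix ι ι K[X])
    (hM : ∀ t : K, t ≠ 0 → M.map (eval t) ∈ closureStabilizer D T) :
    M.map (eval 0) ∈ closureStabilizer D T := by
  intro m hm
  have heval (t : K) : vec (m * M.map (eval t)) = fun p => (vec (m.map C * M) p).eval t := by
    ext p
    simp [mul_apply, eval_finsetSum]
  rw [heval]
  refine eval_zero_mem_degreeClosure _ fun t ht => ?_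
  rw [← heval]
  exact hM t ht m hm

lemma vec_map_submatrix_mem_degreeClosure (f : K ≃+* K) (π : Equiv.Perm ι)
    (hT : ∀ t ∈ T, (t.map f).submatrix π π = t) {m : Matrix ι ι K}
    (hm : vec m ∈ degreeClosure D (vec '' (T : Set (Matrix ι ι K)))) :
    vec ((m.map f).submatrix π π) ∈ degreeClosure D (vec '' (T : Set (Matrix ι ι K))) := by
  have hvec (s : Matrix ι ι K) : vec ((s.map f).submatrix π π) = f ∘ vec s ∘ Prod.map π π := rfl
  rw [hvec]
  refine mapsTo_degreeClosure_ringEquiv f (Prod.map π π) ?_ hm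
  rintro _ ⟨t, ht, rfl⟩
  exact subset_degreeClosure ⟨t, ht, (congrArg vec (hT t ht)).symm.trans (hvec t)⟩

lemma map_submatrix_mem_closureStabilizer (f : K ≃+* K) (π : Equiv.Perm ι)
    (hT : ∀ t ∈ T, (t.map f).submatrix π π = t) {s : Matrix ι ι K}
    (hs : s ∈ closureStabilizer D T) : (s.map f).submatrix π π ∈ closureStabilizer D T := by
  intro m hm
  have hT' (t) (ht : t ∈ T) : (t.map f.symm).submatrix π.symm π.symm = t := by
    conv_lhs => rw [← hT t ht]
    ext; simp
  have hm' := hs _ (vec_map_submatrix_mem_degreeClosure f.symm π.symm hT' hm)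
  convert vec_map_submatrix_mem_degreeClosure f π hT hm' using 2
  rw [← RingEquiv.coe_toRingHom, Matrix.map_mul, ← submatrix_mul_equiv _ _ π π π]
  congr 1
  ext; simp

lemma add_one_pow_card_sq_le_of_closureStabilizer_eq_top [Infinite K] {d : ℕ}
    (hT : (T : Set (Matrix ι ι K)).Finite)
    (h : closureStabilizer (Fintype.card ι ^ 2 * d) T = ⊤) :
    (d + 1) ^ Fintype.card ι ^ 2 ≤ Nat.card T := by
  have hcard : Fintype.card ι ^ 2 = Fintype.card (ι × ι) := by rw [Fintype.card_prod, sq]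
  have hclosure : degreeClosure (Fintype.card ι ^ 2 * d) (vec '' (T : Set (Matrix ι ι K))) =
      Set.univ := by
    refine Set.eq_univ_of_forall fun x => ?_
    obtain ⟨s, rfl⟩ := vec_bijective.surjective x
    have hs : s ∈ closureStabilizer (Fintype.card ι ^ 2 * d) T := by rw [h]; trivial
    simpa only [one_mul] using hs 1 (subset_degreeClosure ⟨1, T.one_mem, rfl⟩)
  rw [hcard] at hclosure ⊢
  exact (add_one_pow_card_le_of_degreeClosure_eq_univ (hT.image _) hclosure).trans
    (Set.ncard_image_le hT)

end ClosureStabilizer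

section EmbeddingEigenbasis

variable {ι F K L : Type*} [Fintype ι] [Field F] [Field K] [Algebra F K] [Field L]
  [Algebra F L]

lemma exists_algEquiv_comp_eq [Normal F K] [FiniteDimensional F L] [Algebra.IsSeparable F L]
    (σ σ' : L →ₐ[F] K) : ∃ τ : K ≃ₐ[F] K, (τ : K →ₐ[F] K).comp σ = σ' := by
  let pb := Field.powerBasisOfFiniteOfSeparable F L
  have hint : IsIntegral F pb.gen := pb.isIntegral_gen
  obtain ⟨τ, hτ⟩ := minpoly.exists_algEquiv_of_root (K := F) (x := σ pb.gen) (y := σ' pb.gen)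
    (hint.map σ').isAlgebraic (by
      rw [minpoly.algHom_eq σ' σ'.injective, Polynomial.aeval_algHom_apply, minpoly.aeval,
        map_zero])
  exact ⟨τ, pb.algHom_ext hτ⟩

/-- The matrix `(σ (b j))`, with the embeddings `σ : L → K` indexed by `ι` through `e`. It maps
coordinates in `b` to coordinates in which all multiplications by elements of `L` are diagonal. -/
noncomputable def embeddingMatrix (b : Module.Basis ι F L) (e : ι ≃ (L →ₐ[F] K)) : Matrix ι ι K :=
  of fun i j => e i (b j)

variable (b : Module.Basis ι F L) (e : ι ≃ (L →ₐ[F] K))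

lemma isUnit_det_embeddingMatrix [DecidableEq ι] [IsAlgClosed K] [FiniteDimensional F L]
    [Algebra.IsSeparable F L] :
    IsUnit (embeddingMatrix b e).det := by
  have htranspose : embeddingMatrix b e = (Algebra.embeddingsMatrixReindex F K b e)ᵀ := rfl
  rw [isUnit_iff_ne_zero, htranspose, det_transpose]
  refine fun hdet => Algebra.discr_not_zero_of_basis F b ((algebraMap F K).injective ?_)
  rw [Algebra.discr_eq_det_embeddingsMatrixReindex_pow_two F K b e, hdet, zero_pow two_ne_zero,
    map_zero]

lemma embeddingMatrix_mulVec_equivFun (l : L) :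
    embeddingMatrix b e *ᵥ (algebraMap F K ∘ b.equivFun l) = fun i => e i l := by
  ext i
  conv_rhs => rw [← b.sum_equivFun l, map_sum]
  exact Finset.sum_congr rfl fun j _ => by
    rw [map_smul, Algebra.smul_def, mul_comm]; rfl

lemma embeddingMatrix_mul_leftMulMatrix [DecidableEq ι] (l : L) :
    embeddingMatrix b e * (Algebra.leftMulMatrix b l).map (algebraMap F K) =
      diagonal (fun i => e i l) * embeddingMatrix b e := by
  ext i j
  have hcolumn : (fun k => (Algebra.leftMulMatrix b l).map (algebraMap F K) k j) =
      algebraMap F K ∘ b.equivFun (l * b j) := by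
    ext k
    simp [Algebra.leftMulMatrix_eq_repr_mul]
  calc (embeddingMatrix b e * (Algebra.leftMulMatrix b l).map (algebraMap F K)) i j
      = (embeddingMatrix b e *ᵥ (algebraMap F K ∘ b.equivFun (l * b j))) i := by
        rw [← hcolumn]; rfl
    _ = (diagonal (fun i => e i l) * embeddingMatrix b e) i j := by
        rw [embeddingMatrix_mulVec_equivFun, diagonal_mul]; exact map_mul _ _ _

end EmbeddingEigenbasis

lemma pow_mulVec_eq_smul {ι R : Type*} [Fintype ι] [DecidableEq ι] [CommSemiring R]
    {x : Matrix ι ι R} {v : ι → R} {μ : R} (h : x *ᵥ v = μ • v) (k : ℕ) :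
    x ^ k *ᵥ v = μ ^ k • v := by
  induction k with
  | zero => rw [pow_zero, pow_zero, one_mulVec, one_smul]
  | succ k ih => rw [pow_succ, ← mulVec_mulVec, h, mulVec_smul, ih, smul_smul, pow_succ']

section EmbeddingConj

variable {ι F K L : Type*} [Fintype ι] [DecidableEq ι] [Field F] [Field K] [Algebra F K] [Field L]
  [Algebra F L] [IsAlgClosed K] [FiniteDimensional F L] [Algebra.IsSeparable F L]
  (b : Module.Basis ι F L) (e : ι ≃ (L →ₐ[F] K))

/-- Conjugation by `embeddingMatrix b e`, which rewrites an endomorphism of `L` in the eigenbasis of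
the multiplication operators. -/
noncomputable def embeddingConj : Matrix ι ι F →* Matrix ι ι K where
  toFun h := embeddingMatrix b e * h.map (algebraMap F K) * (embeddingMatrix b e)⁻¹
  map_one' := by
    rw [Matrix.map_one _ (map_zero _) (map_one _), mul_one,
      mul_nonsing_inv _ (isUnit_det_embeddingMatrix b e)]
  map_mul' h h' := by
    rw [Matrix.map_mul]
    simp only [mul_assoc]
    rw [nonsing_inv_mul_cancel_left _ _ (isUnit_det_embeddingMatrix b e)]

lemma embeddingConj_eq_iff {h : Matrix ι ι F} {M : Matrix ι ι K} :
    embeddingConj b e h = M ↔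
      M * embeddingMatrix b e = embeddingMatrix b e * h.map (algebraMap F K) := by
  have hdet := isUnit_det_embeddingMatrix b e
  refine ⟨?_, fun hM => ?_⟩
  · rintro rfl
    exact nonsing_inv_mul_cancel_right _ _ hdet
  · change embeddingMatrix b e * h.map (algebraMap F K) * (embeddingMatrix b e)⁻¹ = M
    rw [← hM, mul_nonsing_inv_cancel_right _ _ hdet]

lemma embeddingConj_leftMulMatrix (l : L) :
    embeddingConj b e (Algebra.leftMulMatrix b l) = diagonal fun i => e i l :=
  (embeddingConj_eq_iff b e).2 (embeddingMatrix_mul_leftMulMatrix b e l).symm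

lemma embeddingConj_mulVec_embeddingMatrix_mulVec (h : Matrix ι ι F) (v : ι → K) :
    embeddingConj b e h *ᵥ (embeddingMatrix b e *ᵥ v) =
      embeddingMatrix b e *ᵥ (h.map (algebraMap F K) *ᵥ v) := by
  rw [mulVec_mulVec, (embeddingConj_eq_iff b e).1 rfl, mulVec_mulVec]

lemma map_submatrix_embeddingConj (τ : K ≃ₐ[F] K) (π : Equiv.Perm ι)
    (hπ : ∀ i, (τ : K →ₐ[F] K).comp (e (π i)) = e i) (h : Matrix ι ι F) :
    ((embeddingConj b e h).map τ).submatrix π π = embeddingConj b e h := by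
  refine ((embeddingConj_eq_iff b e).2 ?_).symm
  have hP : embeddingMatrix b e = ((embeddingMatrix b e).map τ).submatrix π id := by
    ext i j
    exact (DFunLike.congr_fun (hπ i) (b j)).symm
  have hh : (h.map (algebraMap F K)).map τ = h.map (algebraMap F K) := by
    ext; simp
  have hmap (M N : Matrix ι ι K) : M.map τ * N.map τ = (M * N).map τ :=
    (Matrix.map_mul (f := (τ : K →+* K))).symm
  conv_lhs => rw [hP, submatrix_mul_equiv, hmap, (embeddingConj_eq_iff b e).1 rfl, ← hmap, hh]
  conv_rhs => rw [hP]
  rfl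

variable {b e} {Hs : Submonoid (Matrix ι ι F)} {D : ℕ}

lemma diagonal_mem_closureStabilizer [Finite F]
    (hD : D * Nat.card F ^ Fintype.card ι <
      {l : L | Algebra.leftMulMatrix b l ∈ Hs}.ncard * Nat.card F) (d : ι → K) :
    diagonal d ∈ closureStabilizer D (Hs.map (embeddingConj b e)) := by
  intro m hm
  let φ : (ι → K) →ₗ[K] ι × ι → K :=
    { toFun c := vec (m * diagonal (embeddingMatrix b e *ᵥ c))
      map_add' c c' := by
        rw [mulVec_add, ← vec_add, ← mul_add, diagonal_add]; rfl
      map_smul' r c := by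
        rw [mulVec_smul, diagonal_smul, Matrix.mul_smul, vec_smul, RingHom.id_apply] }
  have htorus : degreeClosure D ((algebraMap F K ∘ ·) ''
      (b.equivFun '' {l : L | Algebra.leftMulMatrix b l ∈ Hs})) = Set.univ :=
    degreeClosure_image_algebraMap_eq_univ (by
      rwa [Set.ncard_image_of_injective _ b.equivFun.injective])
  have hφ : φ ((embeddingMatrix b e)⁻¹ *ᵥ d) = vec (m * diagonal d) := by
    change vec (m * diagonal (embeddingMatrix b e *ᵥ ((embeddingMatrix b e)⁻¹ *ᵥ d))) = _
    rw [mulVec_mulVec, mul_nonsing_inv _ (isUnit_det_embeddingMatrix b e), one_mulVec]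
  rw [← hφ]
  refine mapsTo_degreeClosure_linearMap φ ?_ (htorus ▸ Set.mem_univ _)
  rintro _ ⟨_, ⟨l, hl, rfl⟩, rfl⟩
  have hl' : diagonal (fun i => e i l) ∈ Hs.map (embeddingConj b e) :=
    ⟨_, hl, embeddingConj_leftMulMatrix b e l⟩
  change vec (m * diagonal (embeddingMatrix b e *ᵥ (algebraMap F K ∘ b.equivFun l))) ∈ _
  rw [embeddingMatrix_mulVec_equivFun]
  exact le_closureStabilizer hl' m hm

lemma exists_perm_rootRel_closureStabilizer [Normal F K] (i j : ι) :
    ∃ π : Equiv.Perm ι, π i = j ∧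
      ∀ k l, RootRel (closureStabilizer D (Hs.map (embeddingConj b e))) k l →
        RootRel (closureStabilizer D (Hs.map (embeddingConj b e))) (π k) (π l) := by
  obtain ⟨τ, hτ⟩ := exists_algEquiv_comp_eq (e i) (e j)
  let π : Equiv.Perm ι :=
    { toFun k := e.symm ((τ : K →ₐ[F] K).comp (e k))
      invFun k := e.symm ((τ.symm : K →ₐ[F] K).comp (e k))
      left_inv k := by
        simp only [Equiv.apply_symm_apply, Equiv.symm_apply_eq]
        ext; simp
      right_inv k := by
        simp only [Equiv.apply_symm_apply, Equiv.symm_apply_eq]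
        ext; simp }
  have hπ (k : ι) : (τ : K →ₐ[F] K).comp (e (π.symm k)) = e k :=
    (e.apply_symm_apply _).symm.trans (congrArg e (π.apply_symm_apply k))
  refine ⟨π, e.symm_apply_eq.2 hτ, fun k l hkl c => ?_⟩
  have hmem := map_submatrix_mem_closureStabilizer τ.toRingEquiv π.symm
    (by rintro _ ⟨h, -, rfl⟩; exact map_submatrix_embeddingConj b e τ π.symm hπ h)
    (hkl (τ.symm c))
  convert hmem using 1
  ext a a'
  simp [Matrix.transvection, one_apply, single_apply, Equiv.eq_symm_apply, apply_ite τ]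

theorem closureStabilizer_eq_top_of_eigenvector [Finite F] [Normal F K]
    (hD : D * Nat.card F ^ Fintype.card ι <
      {l : L | Algebra.leftMulMatrix b l ∈ Hs}.ncard * Nat.card F)
    {x x' : Matrix ι ι F} (hx : x ∈ Hs) (hx' : x' ∈ Hs) (hxx' : x * x' = 1)
    {v : ι → F} {μ : F} (hv : v ≠ 0) (hμ : x *ᵥ v = μ • v)
    (hline : ∀ (c : K) (w w' : ι → K), w ≠ 0 →
      x.map (algebraMap F K) ^ (Fintype.card ι).factorial *ᵥ w = c • w →
      x.map (algebraMap F K) ^ (Fintype.card ι).factorial *ᵥ w' = c • w' → ∃ r : K, w' = r • w) :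
    closureStabilizer D (Hs.map (embeddingConj b e)) = ⊤ := by
  have : Infinite K := IsAlgClosed.instInfinite
  set N := (Fintype.card ι).factorial
  set y := x.map (algebraMap F K)
  set A := embeddingMatrix b e
  have hA : IsUnit A.det := isUnit_det_embeddingMatrix b e
  have hconj (u : ι → K) : embeddingConj b e x ^ N *ᵥ (A *ᵥ u) = A *ᵥ (y ^ N *ᵥ u) := by
    rw [← map_pow, embeddingConj_mulVec_embeddingMatrix_mulVec, Matrix.map_pow]
  have hv' : y ^ N *ᵥ (algebraMap F K ∘ v) = algebraMap F K (μ ^ N) • (algebraMap F K ∘ v) := by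
    ext i
    rw [← Matrix.map_pow, ← RingHom.map_mulVec, pow_mulVec_eq_smul hμ]
    exact map_mul _ _ _
  have hv₀ : algebraMap F K ∘ v ≠ 0 := fun h => hv <| funext fun i =>
    (algebraMap F K).injective ((congrFun h i).trans (map_zero _).symm)
  have hclosed : IsToricClosed (closureStabilizer D (Hs.map (embeddingConj b e))) :=
    ⟨diagonal_mem_closureStabilizer hD, eval_zero_mem_closureStabilizer⟩
  refine hclosed.eq_top_of_eigenvector exists_perm_rootRel_closureStabilizer
    (w := A *ᵥ (algebraMap F K ∘ v)) (μ := algebraMap F K (μ ^ N))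
    (le_closureStabilizer ⟨x, hx, rfl⟩) (le_closureStabilizer ⟨x', hx', rfl⟩)
    (by rw [← map_mul, hxx', map_one]) (fun i => ?_) (by rw [hconj, hv', mulVec_smul])
    fun w' hw' => ?_
  · rw [← b.equivFun.apply_symm_apply v, embeddingMatrix_mulVec_equivFun]
    simpa only [ne_eq, map_eq_zero, LinearEquiv.map_eq_zero_iff] using hv
  · have hw : A *ᵥ (A⁻¹ *ᵥ w') = w' := by rw [mulVec_mulVec, mul_nonsing_inv _ hA, one_mulVec]
    rw [← hw, hconj, ← mulVec_smul] at hw'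
    obtain ⟨r, hr⟩ := hline _ _ _ hv₀ hv'
      (mulVec_injective_of_isUnit ((isUnit_iff_isUnit_det _).2 hA) hw')
    exact ⟨r, by rw [← hw, hr, mulVec_smul]⟩

end EmbeddingConj

section Krylov

variable {n : ℕ}

/-- The Krylov matrix with rows `f * y ^ j`. -/
def krylovMatrix {R : Type*} [Semiring R] (f : Fin n → R) (y : Matrix (Fin n) (Fin n) R) :
    Matrix (Fin n) (Fin n) R :=
  of fun j => f ᵥ* y ^ (j : ℕ)

lemma krylovMatrix_map {R S : Type*} [Semiring R] [Semiring S] (φ : R →+* S) (f : Fin n → R)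
    (y : Matrix (Fin n) (Fin n) R) :
    krylovMatrix (φ ∘ f) (y.map φ) = (krylovMatrix f y).map φ := by
  ext i j
  rw [map_apply]
  change ((φ ∘ f) ᵥ* y.map φ ^ (i : ℕ)) j = φ ((f ᵥ* y ^ (i : ℕ)) j)
  rw [RingHom.map_vecMul, Matrix.map_pow]

lemma krylovMatrix_conj {R : Type*} [CommSemiring R] {g g' : Matrix (Fin n) (Fin n) R}
    (hg : g' * g = 1) (f : Fin n → R) (y : Matrix (Fin n) (Fin n) R) :
    krylovMatrix (f ᵥ* g') (g * y * g') = krylovMatrix f y * g' := by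
  have hpow (j : ℕ) : g' * (g * y * g') ^ j = y ^ j * g' := by
    induction j with
    | zero => rw [pow_zero, pow_zero, mul_one, one_mul]
    | succ j ih =>
      calc g' * (g * y * g') ^ (j + 1) = y ^ j * (g' * g) * y * g' := by
            rw [pow_succ, ← mul_assoc, ih]; simp only [mul_assoc]
        _ = y ^ (j + 1) * g' := by rw [hg, mul_one, pow_succ]
  ext i j
  change ((f ᵥ* g') ᵥ* (g * y * g') ^ (i : ℕ)) j = ((f ᵥ* y ^ (i : ℕ)) ᵥ* g') j
  rw [vecMul_vecMul, hpow, vecMul_vecMul]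

lemma krylovMatrix_smul {R : Type*} [CommSemiring R] (c : R) (f : Fin n → R)
    (y : Matrix (Fin n) (Fin n) R) :
    krylovMatrix f (c • y) = diagonal (fun j : Fin n => c ^ (j : ℕ)) * krylovMatrix f y := by
  ext i j
  rw [diagonal_mul]
  change (f ᵥ* (c • y) ^ (i : ℕ)) j = _
  rw [smul_pow, vecMul_smul]
  rfl

lemma krylovMatrix_mulVec_of_mulVec_eq_smul {R : Type*} [CommSemiring R] (f : Fin n → R)
    {y : Matrix (Fin n) (Fin n) R} {w : Fin n → R} {c : R} (hw : y *ᵥ w = c • w) :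
    krylovMatrix f y *ᵥ w = (f ⬝ᵥ w) • fun j : Fin n => c ^ (j : ℕ) := by
  ext j
  change f ᵥ* y ^ (j : ℕ) ⬝ᵥ w = f ⬝ᵥ w * c ^ (j : ℕ)
  rw [← dotProduct_mulVec, pow_mulVec_eq_smul hw, dotProduct_smul, smul_eq_mul, mul_comm]

variable {F : Type*} [Field F] {y : Matrix (Fin n) (Fin n) F}

/-- A square matrix is cyclic if the translates of some row vector by its powers form a basis. -/
def IsCyclicMatrix (y : Matrix (Fin n) (Fin n) F) : Prop :=
  ∃ f : Fin n → F, (krylovMatrix f y).det ≠ 0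

lemma IsCyclicMatrix.map {K : Type*} [Field K] (hy : IsCyclicMatrix y) (φ : F →+* K) :
    IsCyclicMatrix (y.map φ) := by
  obtain ⟨f, hf⟩ := hy
  refine ⟨φ ∘ f, ?_⟩
  rwa [krylovMatrix_map, ← RingHom.mapMatrix_apply, ← RingHom.map_det, ne_eq, map_eq_zero]

lemma IsCyclicMatrix.conj (hy : IsCyclicMatrix y) {g g' : Matrix (Fin n) (Fin n) F}
    (hg : g' * g = 1) : IsCyclicMatrix (g * y * g') := by
  obtain ⟨f, hf⟩ := hy
  refine ⟨f ᵥ* g', ?_⟩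
  rw [krylovMatrix_conj hg, det_mul]
  exact mul_ne_zero hf (det_ne_zero_of_right_inverse hg)

lemma IsCyclicMatrix.of_smul {c : F} (hy : IsCyclicMatrix (c • y)) : IsCyclicMatrix y := by
  obtain ⟨f, hf⟩ := hy
  rw [krylovMatrix_smul, det_mul] at hf
  exact ⟨f, right_ne_zero_of_mul hf⟩

lemma IsCyclicMatrix.exists_eq_smul_of_eigenvector (hy : IsCyclicMatrix y) {c : F}
    {w w' : Fin n → F} (hw₀ : w ≠ 0) (hw : y *ᵥ w = c • w) (hw' : y *ᵥ w' = c • w') :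
    ∃ r : F, w' = r • w := by
  obtain ⟨f, hf⟩ := hy
  have hinj : Function.Injective (krylovMatrix f y *ᵥ ·) :=
    mulVec_injective_of_isUnit ((isUnit_iff_isUnit_det _).2 hf.isUnit)
  have hfw : f ⬝ᵥ w ≠ 0 := fun h => hw₀ <| hinj <| by
    simp only [krylovMatrix_mulVec_of_mulVec_eq_smul f hw, h, zero_smul, mulVec_zero]
  refine ⟨(f ⬝ᵥ w') / (f ⬝ᵥ w), hinj ?_⟩
  simp only [mulVec_smul, krylovMatrix_mulVec_of_mulVec_eq_smul f hw,
    krylovMatrix_mulVec_of_mulVec_eq_smul f hw', smul_smul, div_mul_cancel₀ _ hfw]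

end Krylov

theorem add_one_pow_sq_le_card_of_eigenvector {n : ℕ} {F L : Type*} [Field F] [Finite F] [Field L]
    [Algebra F L] {b : Module.Basis (Fin n) F L} {Hs : Submonoid (Matrix (Fin n) (Fin n) F)} {d : ℕ}
    (hd : n ^ 2 * d * Nat.card F ^ n <
      {l : L | Algebra.leftMulMatrix b l ∈ Hs}.ncard * Nat.card F)
    {x x' : Matrix (Fin n) (Fin n) F} (hx : x ∈ Hs) (hx' : x' ∈ Hs) (hxx' : x * x' = 1)
    {v : Fin n → F} {μ : F} (hv : v ≠ 0) (hμ : x *ᵥ v = μ • v)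
    (hcyclic : IsCyclicMatrix (x ^ n.factorial)) :
    (d + 1) ^ n ^ 2 ≤ Nat.card Hs := by
  let K := AlgebraicClosure F
  have : FiniteDimensional F L := .of_basis b
  have : Infinite K := IsAlgClosed.instInfinite
  let e : Fin n ≃ (L →ₐ[F] K) := Finite.equivFinOfCardEq
    ((Nat.card_eq_fintype_card).trans ((AlgHom.card F L K).trans
      ((Module.finrank_eq_card_basis b).trans (Fintype.card_fin n)))) |>.symm
  have htop : closureStabilizer (Fintype.card (Fin n) ^ 2 * d) (Hs.map (embeddingConj b e)) = ⊤ :=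
    closureStabilizer_eq_top_of_eigenvector (by simpa only [Fintype.card_fin] using hd) hx hx' hxx'
      hv hμ fun c w w' hw₀ hw hw' => by
        rw [Fintype.card_fin, ← Matrix.map_pow] at hw hw'
        exact (hcyclic.map (algebraMap F K)).exists_eq_smul_of_eigenvector hw₀ hw hw'
  have hcard := add_one_pow_card_sq_le_of_closureStabilizer_eq_top
    ((Set.toFinite (Hs : Set _)).image (embeddingConj b e)) htop
  rw [Fintype.card_fin] at hcard
  exact hcard.trans (Set.ncard_image_le (Set.toFinite _))

section CyclicCount

variable {n : ℕ} {F : Type*} [Field F]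

lemma card_generalLinearGroup_eq {ι R : Type*} [Fintype ι] [DecidableEq ι] [Nonempty ι]
    [CommRing R] : Nat.card (GL ι R) = Nat.card Rˣ * Nat.card (SpecialLinearGroup ι R) := by
  have hker : (SpecialLinearGroup.toGL (n := ι) (R := R)).range = GeneralLinearGroup.det.ker :=
    SetLike.coe_injective SpecialLinearGroup.range_toGL
  have hindex : (GeneralLinearGroup.det (n := ι) (R := R)).ker.index = Nat.card Rˣ := by
    rw [Subgroup.index_ker, MonoidHom.range_eq_top.2 GeneralLinearGroup.det_surjective,
      Subgroup.card_top]
  rw [← hindex, ← hker, Nat.card_congr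
    (MonoidHom.ofInjective (SpecialLinearGroup.toGL_injective (n := ι) (R := R))).toEquiv,
    Subgroup.index_mul_card]

lemma card_units_mul_card_specialLinearGroup_le [Finite F] {ι : Type*} [Fintype ι] [DecidableEq ι]
    [Nonempty ι] :
    Nat.card Fˣ * Nat.card (SpecialLinearGroup ι F) ≤ Nat.card F ^ Fintype.card ι ^ 2 := by
  rw [← card_generalLinearGroup_eq]
  refine (Nat.card_le_card_of_injective _ Units.val_injective).trans_eq ?_
  rw [← Nat.card_congr (Matrix.of (m := ι) (n := ι) (α := F)), Nat.card_fun, Nat.card_fun,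
    Nat.card_eq_fintype_card (α := ι), ← pow_mul, sq]

lemma card_pow_sq_le_two_pow_mul_card_generalLinearGroup [Finite F] :
    Nat.card F ^ n ^ 2 ≤ 2 ^ n * Nat.card (GL (Fin n) F) := by
  have := Fintype.ofFinite F
  have hq : 2 ≤ Nat.card F := Finite.one_lt_card
  have hfactor (i : Fin n) : Nat.card F ^ n ≤ 2 * (Nat.card F ^ n - Nat.card F ^ (i : ℕ)) := by
    have := calc 2 * Nat.card F ^ (i : ℕ)
        _ ≤ Nat.card F ^ ((i : ℕ) + 1) := by rw [pow_succ']; gcongr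
        _ ≤ Nat.card F ^ n := Nat.pow_le_pow_right (by omega) i.2
    omega
  calc Nat.card F ^ n ^ 2 = ∏ _i : Fin n, Nat.card F ^ n := by simp [sq, pow_mul]
    _ ≤ ∏ i : Fin n, 2 * (Nat.card F ^ n - Nat.card F ^ (i : ℕ)) :=
      Finset.prod_le_prod' fun i _ => hfactor i
    _ = 2 ^ n * Nat.card (GL (Fin n) F) := by
      rw [Finset.prod_mul_distrib, card_GL_field, Nat.card_eq_fintype_card]; simp

lemma totalDegree_mvPolynomialX_pow_le {ι R : Type*} [Fintype ι] [DecidableEq ι] [CommSemiring R]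
    [Nontrivial R] (k : ℕ) (i j : ι) : ((mvPolynomialX ι ι R ^ k) i j).totalDegree ≤ k := by
  induction k generalizing j with
  | zero =>
    rw [pow_zero, one_apply]
    split_ifs <;> simp
  | succ k ih =>
    rw [pow_succ, mul_apply]
    refine MvPolynomial.totalDegree_finsetSum_le fun l _ =>
      (MvPolynomial.totalDegree_mul _ _).trans (Nat.add_le_add (ih l) ?_)
    rw [mvPolynomialX_apply]
    exact (MvPolynomial.totalDegree_X _).le

lemma totalDegree_det_le {ι σ R : Type*} [Fintype ι] [DecidableEq ι] [CommRing R]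
    (M : Matrix ι ι (MvPolynomial σ R)) {d : ℕ} (hM : ∀ i j, (M i j).totalDegree ≤ d) :
    M.det.totalDegree ≤ Fintype.card ι * d := by
  rw [det_apply]
  refine MvPolynomial.totalDegree_finsetSum_le fun s _ => ?_
  have hprod : (∏ i, M (s i) i).totalDegree ≤ Fintype.card ι * d :=
    (MvPolynomial.totalDegree_finsetProd _ _).trans
      (Finset.sum_le_card_nsmul _ _ d fun i _ => hM _ _)
  rcases Int.units_eq_one_or (Equiv.Perm.sign s) with hs | hs
  · rwa [hs, one_smul]
  · rwa [hs, Units.neg_smul, one_smul, MvPolynomial.totalDegree_neg]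

variable (n F) in
/-- The polynomial in the entries of a matrix `x` that computes the Krylov determinant of `x ^ k`
for the all-ones row vector. -/
noncomputable def krylovPolynomial (k : ℕ) : MvPolynomial (Fin n × Fin n) F :=
  (krylovMatrix 1 (mvPolynomialX (Fin n) (Fin n) F ^ k)).det

lemma eval_krylovPolynomial (k : ℕ) (x : Matrix (Fin n) (Fin n) F) :
    MvPolynomial.eval (fun p => x p.1 p.2) (krylovPolynomial n F k) =
      (krylovMatrix 1 (x ^ k)).det := by
  let φ : MvPolynomial (Fin n × Fin n) F →+* F := MvPolynomial.eval fun p => x p.1 p.2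
  have hone : φ ∘ (1 : Fin n → MvPolynomial _ F) = 1 := funext fun _ => map_one φ
  have hX : (mvPolynomialX (Fin n) (Fin n) F).map φ = x := by
    ext i j
    exact MvPolynomial.eval_X _
  change φ (krylovPolynomial n F k) = _
  rw [krylovPolynomial, RingHom.map_det, RingHom.mapMatrix_apply, ← krylovMatrix_map, hone,
    Matrix.map_pow, hX]

lemma totalDegree_krylovPolynomial_le (k : ℕ) :
    (krylovPolynomial n F k).totalDegree ≤ n * (k * n) := by
  refine (totalDegree_det_le _ fun j i => ?_).trans_eq (by rw [Fintype.card_fin])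
  change (∑ l, 1 * ((mvPolynomialX (Fin n) (Fin n) F ^ k) ^ (j : ℕ)) l i).totalDegree ≤ k * n
  refine MvPolynomial.totalDegree_finsetSum_le fun l _ => ?_
  rw [one_mul, ← pow_mul]
  exact (totalDegree_mvPolynomialX_pow_le _ _ _).trans (Nat.mul_le_mul_left _ j.2.le)

lemma krylovPolynomial_ne_zero [IsAlgClosed F] {k : ℕ} (hk : 0 < k) :
    krylovPolynomial n F k ≠ 0 := by
  have : Infinite F := IsAlgClosed.instInfinite
  let a : Fin n → F := fun i => Infinite.natEmbedding F i
  have ha : Function.Injective a := (Infinite.natEmbedding F).injective.comp Fin.val_injective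
  choose t ht using fun i => IsAlgClosed.exists_pow_nat_eq (a i) hk
  have hvandermonde : krylovMatrix 1 (diagonal t ^ k) = (vandermonde a)ᵀ := by
    ext j i
    rw [diagonal_pow, show t ^ k = a from funext ht]
    change ((1 : Fin n → F) ᵥ* diagonal a ^ (j : ℕ)) i = a i ^ (j : ℕ)
    rw [diagonal_pow, vecMul_diagonal, Pi.one_apply, one_mul, Pi.pow_apply]
  intro h
  have hdet := eval_krylovPolynomial k (diagonal t)
  rw [h, map_zero, hvandermonde, det_transpose] at hdet
  exact det_vandermonde_ne_zero_iff.2 ha hdet.symm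

lemma card_not_isCyclicMatrix_pow_mul_card_le [Finite F] {k : ℕ} (hk : 0 < k) :
    {x : Matrix (Fin n) (Fin n) F | ¬ IsCyclicMatrix (x ^ k)}.ncard * Nat.card F ≤
      n * (k * n) * Nat.card F ^ n ^ 2 := by
  let K := AlgebraicClosure F
  have hzeros : {x : Matrix (Fin n) (Fin n) F | ¬ IsCyclicMatrix (x ^ k)}.ncard ≤
      {z : Fin n × Fin n → F |
        MvPolynomial.eval (algebraMap F K ∘ z) (krylovPolynomial n K k) = 0}.ncard := by
    refine Set.ncard_le_ncard_of_injOn (fun x p => x p.1 p.2) (fun x hx => ?_)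
      (fun x _ y _ hxy => Matrix.ext fun i j => congrFun hxy (i, j)) (Set.toFinite _)
    by_contra hne
    refine hx ⟨1, fun hdet => hne ?_⟩
    refine (eval_krylovPolynomial k (x.map (algebraMap F K))).trans ?_
    have hone : algebraMap F K ∘ (1 : Fin n → F) = 1 := funext fun _ => map_one _
    rw [← Matrix.map_pow, ← hone, krylovMatrix_map, ← RingHom.mapMatrix_apply, ← RingHom.map_det,
      hdet, map_zero]
  calc {x : Matrix (Fin n) (Fin n) F | ¬ IsCyclicMatrix (x ^ k)}.ncard * Nat.card F
      ≤ (krylovPolynomial n K k).totalDegree * Nat.card F ^ Fintype.card (Fin n × Fin n) :=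
        (Nat.mul_le_mul_right _ hzeros).trans
          (card_zeros_mul_card_le_totalDegree_mul (krylovPolynomial_ne_zero hk))
    _ ≤ n * (k * n) * Nat.card F ^ n ^ 2 := by
        rw [Fintype.card_prod, Fintype.card_fin, ← sq]
        gcongr
        exact totalDegree_krylovPolynomial_le k

lemma card_units_mul_card_not_isCyclicMatrix_pow_le [Finite F] (hn : 0 < n) (k : ℕ) :
    Nat.card Fˣ * {s : SpecialLinearGroup (Fin n) F | ¬ IsCyclicMatrix (s.1 ^ k)}.ncard ≤
      n * {x : Matrix (Fin n) (Fin n) F | ¬ IsCyclicMatrix (x ^ k)}.ncard := by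
  let S := {s : SpecialLinearGroup (Fin n) F | ¬ IsCyclicMatrix (s.1 ^ k)}
  let X := {x : Matrix (Fin n) (Fin n) F | ¬ IsCyclicMatrix (x ^ k)}
  have hmem (p : Fˣ × S) : (p.1 : F) • p.2.1.1 ∈ X := fun h =>
    p.2.2 (by rw [smul_pow] at h; exact h.of_smul)
  have hdet (p : Fˣ × S) : ((p.1 : F) • p.2.1.1).det = (p.1 : F) ^ n := by
    rw [det_smul, p.2.1.2, Fintype.card_fin, mul_one]
  change Nat.card Fˣ * Nat.card S ≤ n * Nat.card X
  rw [← Nat.card_prod]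
  classical
  refine card_le_mul_card_of_fiber_card_le (fun p : Fˣ × S => (⟨_, hmem p⟩ : X))
    (fun p => (p.1 : F)) (fun x => Polynomial.nthRootsFinset n x.1.det) (fun x => ?_)
    (fun p => (Polynomial.mem_nthRootsFinset hn _).2 (hdet p).symm) fun p p' hpp' hc => ?_
  · exact (Multiset.toFinset_card_le _).trans (Polynomial.card_nthRoots n _)
  · have hc' : p.1 = p'.1 := Units.ext hc
    have hs : (p.1 : F) • p.2.1.1 = (p.1 : F) • p'.2.1.1 := by
      conv_rhs => rw [hc']
      exact congrArg Subtype.val hpp'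
    exact Prod.ext hc' (Subtype.ext (Subtype.ext (smul_right_injective _ p.1.ne_zero hs)))

lemma card_not_isCyclicMatrix_pow_specialLinearGroup_mul_card_le [Finite F] (hn : 0 < n) {k : ℕ}
    (hk : 0 < k) :
    {s : SpecialLinearGroup (Fin n) F | ¬ IsCyclicMatrix (s.1 ^ k)}.ncard * Nat.card F ≤
      n * (n * (k * n)) * 2 ^ n * Nat.card (SpecialLinearGroup (Fin n) F) := by
  have : Nonempty (Fin n) := ⟨⟨0, hn⟩⟩
  refine Nat.le_of_mul_le_mul_left ?_ (Nat.card_pos (α := Fˣ))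
  calc Nat.card Fˣ * ({s : SpecialLinearGroup (Fin n) F | ¬ IsCyclicMatrix (s.1 ^ k)}.ncard *
        Nat.card F)
      ≤ n * ({x : Matrix (Fin n) (Fin n) F | ¬ IsCyclicMatrix (x ^ k)}.ncard * Nat.card F) := by
        rw [← mul_assoc, ← mul_assoc]
        exact Nat.mul_le_mul_right _ (card_units_mul_card_not_isCyclicMatrix_pow_le hn k)
    _ ≤ n * (n * (k * n) * (2 ^ n * Nat.card (GL (Fin n) F))) := by
        gcongr n * ?_
        exact (card_not_isCyclicMatrix_pow_mul_card_le hk).trans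
          (Nat.mul_le_mul_left _ card_pow_sq_le_two_pow_mul_card_generalLinearGroup)
    _ = _ := by rw [card_generalLinearGroup_eq]; ring

end CyclicCount

section FixedPoints

variable {G X : Type*} [Group G] [MulAction G X]

/-- Burnside's lemma on `X` and on `X × X` computes the first two moments of the number of fixed
points, and the Cauchy–Schwarz inequality compares them. -/
lemma card_le_card_orbits_mul_card_exists_fixed_point [Finite G] [Finite X] [Nonempty X] :
    Nat.card G ≤ Nat.card (MulAction.orbitRel.Quotient G (X × X)) *
      {g : G | ∃ x : X, g • x = x}.ncard := by
  classical
  have := Fintype.ofFinite G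
  have := Fintype.ofFinite X
  have := Fintype.ofFinite (MulAction.orbitRel.Quotient G X)
  have := Fintype.ofFinite (MulAction.orbitRel.Quotient G (X × X))
  set S : Finset G := {g | ∃ x : X, g • x = x}
  let fix (g : G) : ℕ := Fintype.card (MulAction.fixedBy X g)
  set r := Fintype.card (MulAction.orbitRel.Quotient G (X × X))
  have hfirst : Fintype.card G ≤ ∑ g ∈ S, fix g := by
    have hS : ∑ g ∈ S, fix g = ∑ g, fix g :=
      Finset.sum_subset (Finset.subset_univ _) fun g _ hg => Fintype.card_eq_zero_iff.2
        ⟨fun x => hg (Finset.mem_filter.2 ⟨Finset.mem_univ g, x.1, x.2⟩)⟩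
    rw [hS, MulAction.sum_card_fixedBy_eq_card_orbits_mul_card_group G X]
    exact Nat.le_mul_of_pos_left _ (Fintype.card_pos_iff.2 ⟨⟦Classical.arbitrary X⟧⟩)
  have hsecond : ∑ g ∈ S, fix g ^ 2 ≤ r * Fintype.card G := by
    have hsq (g : G) : fix g ^ 2 = Fintype.card (MulAction.fixedBy (X × X) g) := by
      rw [sq, ← Fintype.card_prod]
      exact Fintype.card_congr
        { toFun p := ⟨(p.1.1, p.2.1), Prod.ext p.1.2 p.2.2⟩
          invFun p := (⟨p.1.1, congrArg Prod.fst p.2⟩, ⟨p.1.2, congrArg Prod.snd p.2⟩) }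
    rw [← MulAction.sum_card_fixedBy_eq_card_orbits_mul_card_group G (X × X)]
    simp only [← hsq]
    exact Finset.sum_le_sum_of_subset (Finset.subset_univ _)
  have hmoments : Fintype.card G * Fintype.card G ≤ r * S.card * Fintype.card G :=
    calc Fintype.card G * Fintype.card G ≤ (∑ g ∈ S, fix g) ^ 2 := by
          rw [sq]; exact Nat.mul_le_mul hfirst hfirst
      _ ≤ S.card * ∑ g ∈ S, fix g ^ 2 := sq_sum_le_card_mul_sum_sq
      _ ≤ S.card * (r * Fintype.card G) := Nat.mul_le_mul_left _ hsecond
      _ = r * S.card * Fintype.card G := by ring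
  rw [Nat.card_eq_fintype_card, Nat.card_eq_fintype_card, Set.ncard_eq_toFinset_card',
    Set.toFinset_ofPred]
  exact Nat.le_of_mul_le_mul_right hmoments Fintype.card_pos

lemma card_orbits_prod_le_two [MulAction.IsMultiplyPretransitive G X 2] :
    Nat.card (MulAction.orbitRel.Quotient G (X × X)) ≤ 2 := by
  classical
  have := MulAction.isPretransitive_of_is_two_pretransitive (G := G) (α := X)
  have hinj : Function.Injective fun ω : MulAction.orbitRel.Quotient G (X × X) =>
      decide (ω.out.1 = ω.out.2) := by
    intro ω ω' h
    suffices ∃ g : G, g • ω'.out = ω.out by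
      rw [← ω.out_eq, ← ω'.out_eq]
      exact Quotient.sound this
    obtain ⟨⟨x, y⟩, hω⟩ : ∃ p, ω.out = p := ⟨_, rfl⟩
    obtain ⟨⟨x', y'⟩, hω'⟩ : ∃ p, ω'.out = p := ⟨_, rfl⟩
    simp only [hω, hω', decide_eq_decide] at h ⊢
    simp only [Prod.smul_mk, Prod.mk.injEq]
    by_cases hxy : x = y
    · obtain ⟨g, hg⟩ := MulAction.exists_smul_eq G x' x
      exact ⟨g, hg, by rw [← h.1 hxy, hg, hxy]⟩
    · exact MulAction.is_two_pretransitive_iff.1 inferInstance (fun h' => hxy (h.2 h')) hxy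
  exact (Nat.card_le_card_of_injective _ hinj).trans_eq (by simp)

lemma card_specialLinearGroup_le_two_mul_card_exists_eigenvector {ι F : Type*} [Fintype ι]
    [DecidableEq ι] [Nonempty ι] [Field F] [Finite F] :
    Nat.card (SpecialLinearGroup ι F) ≤ 2 * {s : SpecialLinearGroup ι F |
      ∃ v ≠ 0, ∃ μ : F, (s : Matrix ι ι F) *ᵥ v = μ • v}.ncard := by
  let P := Projectivization F (ι → F)
  have : Nonempty P := ⟨Projectivization.mk F 1 one_ne_zero⟩
  refine (card_le_card_orbits_mul_card_exists_fixed_point (X := P)).trans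
    (Nat.mul_le_mul card_orbits_prod_le_two (Set.ncard_le_ncard ?_))
  rintro s ⟨p, hp⟩
  induction p using Projectivization.ind with
  | h v hv =>
    rw [Projectivization.smul_mk, Projectivization.mk_eq_mk_iff'] at hp
    obtain ⟨μ, hμ⟩ := hp
    exact ⟨v, hv, μ, hμ.symm⟩

end FixedPoints

lemma ncard_orderOf_le_le_card_divisors_mul {A : Type*} [Group A] [IsCyclic A] [Finite A]
    (B : ℕ) : {a : A | orderOf a ≤ B}.ncard ≤ (Nat.card A).divisors.card * B := by
  classical
  have := Fintype.ofFinite A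
  rw [Set.ncard_eq_toFinset_card', mul_comm]
  refine Finset.card_le_mul_card_image_of_maps_to (f := orderOf)
    (fun a _ => Nat.mem_divisors.2 ⟨orderOf_dvd_natCard a, Nat.card_pos.ne'⟩) B fun d hd => ?_
  rcases le_or_gt d B with hdB | hdB
  · have hφ := IsCyclic.card_orderOf_eq_totient (α := A) (d := d)
      (by rw [← Nat.card_eq_fintype_card]; exact Nat.dvd_of_mem_divisors hd)
    refine le_trans (Finset.card_le_card ?_) (hφ.le.trans ((Nat.totient_le d).trans hdB))
    exact fun a ha => Finset.mem_filter.2 ⟨Finset.mem_univ a, (Finset.mem_filter.1 ha).2⟩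
  · refine (Finset.card_eq_zero.2 (Finset.filter_eq_empty_iff.2 fun a ha h => ?_)).trans_le
      (Nat.zero_le B)
    have : orderOf a ≤ B := by simpa only [Set.mem_toFinset, Set.mem_ofPred_eq] using ha
    omega

section NearGenerators

variable (F : Type*) {L : Type*} [Field F] [Field L] [Algebra F L]

/-- The group `Fˣ⟨l⟩` of the nonzero `F`-multiples of the powers of `l`. -/
def scalarPowers (l : Lˣ) : Subgroup Lˣ :=
  (Units.map (algebraMap F L : F →* L)).range ⊔ Subgroup.zpowers l

/-- The index of `Fˣ⟨l⟩` in `Lˣ` is small, where `L / F` is an extension of finite fields: writing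
`q = |F|` and `n = [L : F]`, this says `n² qⁿ ≤ q ^ (1 / (4n²)) |Fˣ⟨l⟩|`, raised to the power `4n²`
in order to stay within the natural numbers. -/
def IsNearGenerator (l : Lˣ) : Prop :=
  (Module.finrank F L ^ 2 * Nat.card F ^ Module.finrank F L) ^ (4 * Module.finrank F L ^ 2) ≤
    Nat.card F * Nat.card (scalarPowers F l) ^ (4 * Module.finrank F L ^ 2)

variable {F}

/-- A scalar in `⟨l⟩` is an `n`-th root of unity, as its norm is a power of that of `l`. -/
lemma card_scalars_inf_zpowers_le [Finite L] {l : Lˣ} (hl : Algebra.norm F (l : L) = 1) :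
    Nat.card ((Units.map (algebraMap F L : F →* L)).range ⊓ Subgroup.zpowers l : Subgroup Lˣ) ≤
      Module.finrank F L := by
  classical
  have : FiniteDimensional F L := .of_finite
  have := Fintype.ofFinite Lˣ
  set U := (Units.map (algebraMap F L : F →* L)).range ⊓ Subgroup.zpowers l
  have hroot : ∀ u ∈ U, u ^ Module.finrank F L = 1 := by
    rintro _ ⟨⟨c, rfl⟩, hc⟩
    have hnorm : Subgroup.zpowers l ≤ (Units.map (Algebra.norm F : L →* F)).ker :=
      Subgroup.zpowers_le.2 (Units.ext hl)
    rw [← map_pow, (Units.ext ?_ : c ^ Module.finrank F L = 1), map_one]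
    simpa [Algebra.norm_algebraMap] using congrArg Units.val (hnorm hc)
  calc Nat.card U ≤ ({u : Lˣ | u ^ Module.finrank F L = 1} : Finset Lˣ).card := by
        rw [← SetLike.coe_sort_coe, Nat.card_coe_set_eq, ← Set.ncard_coe_finset]
        exact Set.ncard_le_ncard fun u hu => Finset.mem_coe.2
          (Finset.mem_filter.2 ⟨Finset.mem_univ u, hroot u hu⟩)
    _ ≤ Module.finrank F L := IsCyclic.card_pow_eq_one_le Module.finrank_pos

lemma card_units_mul_orderOf_le [Finite L] {l : Lˣ} (hl : Algebra.norm F (l : L) = 1) :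
    Nat.card Fˣ * orderOf l ≤ Module.finrank F L * Nat.card (scalarPowers F l) := by
  set S := (Units.map (algebraMap F L : F →* L)).range
  set Z := Subgroup.zpowers l
  have hmul {H K : Subgroup Lˣ} (h : H ≤ K) : Nat.card H * H.relIndex K = Nat.card K := by
    simpa only [Subgroup.relIndex_bot_left] using Subgroup.relIndex_mul_relIndex ⊥ H K bot_le h
  have hS : Nat.card S = Nat.card Fˣ :=
    Nat.card_congr (Equiv.ofInjective _ (Units.map_injective (algebraMap F L).injective)).symm
  have hZ : Nat.card (S ⊓ Z : Subgroup Lˣ) * S.relIndex Z = orderOf l := by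
    rw [← Subgroup.inf_relIndex_right, hmul inf_le_right, Nat.card_zpowers]
  have hU : Nat.card S * S.relIndex Z = Nat.card (scalarPowers F l) := by
    rw [← Subgroup.relIndex_sup_right, sup_comm]
    exact hmul le_sup_left
  calc Nat.card Fˣ * orderOf l
      = Nat.card (S ⊓ Z : Subgroup Lˣ) * (Nat.card S * S.relIndex Z) := by rw [← hZ, hS]; ring
    _ ≤ _ := by rw [hU]; gcongr; exact card_scalars_inf_zpowers_le hl

lemma card_pow_pred_le_card_norm_eq_one [Finite L] :
    Nat.card F ^ (Module.finrank F L - 1) ≤ {l : Lˣ | Algebra.norm F (l : L) = 1}.ncard := by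
  have : Finite F := .of_injective _ (algebraMap F L).injective
  have : FiniteDimensional F L := .of_finite
  have hn : 0 < Module.finrank F L := Module.finrank_pos
  have hq : 1 < Nat.card F := Finite.one_lt_card
  set φ := Units.map (Algebra.norm F : L →* F)
  have hker : {l : Lˣ | Algebra.norm F (l : L) = 1} = φ.ker := by
    ext l
    simp [φ, MonoidHom.mem_ker, Units.ext_iff]
  have hmul : Nat.card F ^ Module.finrank F L - 1 = Nat.card φ.ker * (Nat.card F - 1) := by
    rw [← Module.natCard_eq_pow_finrank (K := F), ← Nat.card_units, ← Nat.card_units,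
      ← Subgroup.card_mul_index φ.ker, Subgroup.index_ker,
      MonoidHom.range_eq_top.2 (FiniteField.unitsMap_norm_surjective F L), Subgroup.card_top]
  rw [hker, ← Nat.card_coe_set_eq]
  refine Nat.le_of_mul_le_mul_right (le_trans ?_ hmul.le) (Nat.sub_pos_of_lt hq)
  rw [Nat.mul_sub, mul_one, ← pow_succ, Nat.sub_add_cancel hn]
  exact Nat.sub_le_sub_left (Nat.one_le_pow _ _ (by omega)) _

/-- In a cyclic group whose order has `τ` divisors, at most `τ * A` elements have order at most `A`.
For `A` about `q ^ (n - 1 - 1 / K)` this is negligible, as `τ` grows more slowly than any power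
of `q`. -/
lemma two_mul_card_divisors_mul_le {n q m A C τ K : ℕ} (hn : 0 < n) (hK : 0 < K) (hq : 1 < q)
    (hA : (q - 1) * A ≤ n * m) (hm : q * m ^ K ≤ (n ^ 2 * q ^ n) ^ K)
    (hτ : τ ^ (2 * n * K) ≤ C * q ^ n) (hC : C * (4 * n ^ 3) ^ (2 * n * K) ≤ q ^ n) :
    2 * (τ * A) ≤ q ^ (n - 1) := by
  have hqn : q * q ^ (n - 1) = q ^ n := by rw [← pow_succ', Nat.sub_add_cancel hn]
  have hqA : q * A ≤ 2 * (n * m) := by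
    calc q * A ≤ 2 * (q - 1) * A := by gcongr; omega
      _ ≤ 2 * (n * m) := by rw [mul_assoc]; gcongr
  have hAK : q * A ^ K ≤ (2 * n ^ 3 * q ^ (n - 1)) ^ K := by
    refine Nat.le_of_mul_le_mul_left (c := q ^ K) ?_ (by positivity)
    calc q ^ K * (q * A ^ K) = q * (q * A) ^ K := by rw [mul_pow]; ring
      _ ≤ q * (2 * (n * m)) ^ K := by gcongr
      _ = (2 * n) ^ K * (q * m ^ K) := by rw [← mul_assoc 2, mul_pow (2 * n)]; ring
      _ ≤ (2 * n) ^ K * (n ^ 2 * q ^ n) ^ K := by gcongr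
      _ = q ^ K * (2 * n ^ 3 * q ^ (n - 1)) ^ K := by
        rw [← mul_pow, ← mul_pow, ← hqn]; congr 1; ring
  refine (Nat.pow_le_pow_iff_left (n := 2 * n * K) (by positivity)).1 ?_
  refine Nat.le_of_mul_le_mul_right (c := q ^ (2 * n)) ?_ (by positivity)
  calc (2 * (τ * A)) ^ (2 * n * K) * q ^ (2 * n)
      = 2 ^ (2 * n * K) * τ ^ (2 * n * K) * (q * A ^ K) ^ (2 * n) := by
        rw [mul_pow, mul_pow, mul_pow q, ← pow_mul A, mul_comm K]; ring
    _ ≤ 2 ^ (2 * n * K) * (C * q ^ n) * ((2 * n ^ 3 * q ^ (n - 1)) ^ K) ^ (2 * n) := by gcongr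
    _ = (C * (4 * n ^ 3) ^ (2 * n * K)) * q ^ n * (q ^ (n - 1)) ^ (2 * n * K) := by
        rw [← pow_mul, mul_comm K, mul_pow (2 * n ^ 3), show 4 * n ^ 3 = 2 * (2 * n ^ 3) by ring,
          mul_pow 2 (2 * n ^ 3)]
        ring
    _ ≤ q ^ n * q ^ n * (q ^ (n - 1)) ^ (2 * n * K) := by gcongr
    _ = (q ^ (n - 1)) ^ (2 * n * K) * q ^ (2 * n) := by ring

lemma exists_card_pow_pred_le_two_mul_card_isNearGenerator {n : ℕ} (hn : 0 < n) :
    ∃ q₀ : ℕ, ∀ (F L : Type*) [Field F] [Field L] [Algebra F L] [Finite L],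
      Module.finrank F L = n → q₀ ≤ Nat.card F → Nat.card F ^ (n - 1) ≤
        2 * {l : Lˣ | Algebra.norm F (l : L) = 1 ∧ IsNearGenerator F l}.ncard := by
  obtain ⟨C, hC⟩ := exists_card_divisors_pow_le (2 * n * (4 * n ^ 2))
  refine ⟨C * (4 * n ^ 3) ^ (2 * n * (4 * n ^ 2)), fun F L _ _ _ _ hrank hq₀ => ?_⟩
  have : Finite F := .of_injective _ (algebraMap F L).injective
  have : FiniteDimensional F L := .of_finite
  have hτ : (Nat.card Lˣ).divisors.card ^ (2 * n * (4 * n ^ 2)) ≤ C * Nat.card F ^ n := by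
    refine (hC _ Nat.card_pos.ne').trans (Nat.mul_le_mul_left _ ?_)
    rw [← hrank, ← Module.natCard_eq_pow_finrank, Nat.card_units]
    exact Nat.sub_le _ _
  set good := {l : Lˣ | Algebra.norm F (l : L) = 1 ∧ IsNearGenerator F l}
  set bad := {l : Lˣ | Algebra.norm F (l : L) = 1 ∧ ¬ IsNearGenerator F l}
  have hsplit : Nat.card F ^ (n - 1) ≤ good.ncard + bad.ncard := by
    rw [← hrank]
    refine card_pow_pred_le_card_norm_eq_one.trans ((Set.ncard_le_ncard ?_).trans
      (Set.ncard_union_le good bad))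
    exact fun l hl => (em (IsNearGenerator F l)).imp (And.intro hl) (And.intro hl)
  suffices 2 * bad.ncard ≤ Nat.card F ^ (n - 1) by omega
  rcases bad.eq_empty_or_nonempty with hbad | hbad
  · simp [hbad]
  obtain ⟨l, hl, hmax⟩ := bad.exists_max_image orderOf bad.toFinite hbad
  calc 2 * bad.ncard ≤ 2 * ((Nat.card Lˣ).divisors.card * orderOf l) := by
        gcongr
        exact (Set.ncard_le_ncard hmax).trans (ncard_orderOf_le_le_card_divisors_mul _)
    _ ≤ Nat.card F ^ (n - 1) := by
        have hsmall := hl.2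
        rw [IsNearGenerator, hrank, not_le] at hsmall
        refine two_mul_card_divisors_mul_le hn (by positivity) Finite.one_lt_card ?_ hsmall.le hτ
          (hq₀.trans (Nat.le_self_pow hn.ne' _))
        rw [← Nat.card_units, ← hrank]
        exact card_units_mul_orderOf_le hl.1

end NearGenerators

section TorusElements

variable {n : ℕ} {F L : Type*} [Field F] [Field L] [Algebra F L]

lemma exists_coe_eq_smul_pow_of_mem_scalarPowers [Finite L] {l u : Lˣ}
    (hu : u ∈ scalarPowers F l) :
    ∃ (c : Fˣ) (k : ℕ), (u : L) = (c : F) • (l : L) ^ k := by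
  obtain ⟨_, ⟨c, rfl⟩, z, hz, rfl⟩ := Subgroup.mem_sup.1 hu
  obtain ⟨k, rfl⟩ := mem_powers_iff_mem_zpowers.2 hz
  exact ⟨c, k, by simp [Algebra.smul_def]⟩

lemma IsNearGenerator.span_range_pow_eq_top [Finite L] {l : Lˣ} (hl : IsNearGenerator F l) :
    Submodule.span F (Set.range fun k : ℕ => (l : L) ^ k) = ⊤ := by
  have : Finite F := .of_injective _ (algebraMap F L).injective
  have : FiniteDimensional F L := .of_finite
  have hq : 1 < Nat.card F := Finite.one_lt_card
  have hn : 0 < Module.finrank F L := Module.finrank_pos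
  by_contra hne
  set S := Submodule.span F (Set.range fun k : ℕ => (l : L) ^ k)
  have hmem (u : scalarPowers F l) : ((u : Lˣ) : L) ∈ S := by
    obtain ⟨c, k, h⟩ := exists_coe_eq_smul_pow_of_mem_scalarPowers u.2
    exact h ▸ S.smul_mem _ (Submodule.subset_span ⟨k, rfl⟩)
  have hcard : Nat.card (scalarPowers F l) ≤ Nat.card F ^ (Module.finrank F L - 1) := by
    calc Nat.card (scalarPowers F l) ≤ Nat.card S :=
          Nat.card_le_card_of_injective (fun u => (⟨_, hmem u⟩ : S)) fun u u' h =>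
            Subtype.ext (Units.ext (congrArg Subtype.val h))
      _ = Nat.card F ^ Module.finrank F S := Module.natCard_eq_pow_finrank
      _ ≤ _ := Nat.pow_le_pow_right hq.le (Nat.le_pred_of_lt (Submodule.finrank_lt hne))
  rw [IsNearGenerator] at hl
  set n := Module.finrank F L
  have hpow : Nat.card F ^ (n * (4 * n ^ 2)) ≤ Nat.card F ^ ((n - 1) * (4 * n ^ 2) + 1) :=
    calc Nat.card F ^ (n * (4 * n ^ 2)) ≤ (n ^ 2 * Nat.card F ^ n) ^ (4 * n ^ 2) := by
          rw [pow_mul]; gcongr; exact Nat.le_mul_of_pos_left _ (by positivity)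
      _ ≤ Nat.card F * (Nat.card F ^ (n - 1)) ^ (4 * n ^ 2) := hl.trans (by gcongr)
      _ = _ := by rw [← pow_mul, ← pow_succ']
  have hle := (Nat.pow_le_pow_iff_right hq).1 hpow
  obtain ⟨m, hm⟩ : ∃ m, n = m + 1 := ⟨n - 1, by omega⟩
  rw [hm, Nat.add_sub_cancel] at hle
  nlinarith [Nat.zero_le (m ^ 2)]

/-- The basis in which every element of `L` has the coordinates that it has in `b`, multiplied
by `g`. -/
noncomputable def transformBasis (b : Module.Basis (Fin n) F L) (g : GL (Fin n) F) :
    Module.Basis (Fin n) F L :=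
  .ofEquivFun (b.equivFun ≪≫ₗ
    LinearMap.GeneralLinearGroup.generalLinearEquiv F _ (GeneralLinearGroup.toLin g))

lemma transformBasis_repr (b : Module.Basis (Fin n) F L) (g : GL (Fin n) F) (a : L) :
    ⇑((transformBasis b g).repr a) = g.1 *ᵥ b.repr a := rfl

lemma ext_mulVec_repr (b : Module.Basis (Fin n) F L) {x y : Matrix (Fin n) (Fin n) F}
    (h : ∀ a, x *ᵥ b.repr a = y *ᵥ b.repr a) : x = y := by
  refine Matrix.ext_of_mulVec_single fun i => ?_
  simpa [Finsupp.single_eq_pi_single] using h (b i)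

lemma leftMulMatrix_transformBasis (b : Module.Basis (Fin n) F L) (g : GL (Fin n) F) (l : L) :
    Algebra.leftMulMatrix (transformBasis b g) l =
      g.1 * Algebra.leftMulMatrix b l * (g⁻¹).1 := by
  refine ext_mulVec_repr (transformBasis b g) fun a => ?_
  rw [Algebra.leftMulMatrix_mulVec_repr, transformBasis_repr, transformBasis_repr,
    Matrix.mulVec_mulVec, Matrix.mul_assoc, ← Units.val_mul, inv_mul_cancel, Units.val_one,
    Matrix.mul_one, ← Matrix.mulVec_mulVec, Algebra.leftMulMatrix_mulVec_repr]

lemma card_generalLinearGroup_le_card_basis [Finite L] (b : Module.Basis (Fin n) F L) :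
    Nat.card (GL (Fin n) F) ≤ Nat.card (Module.Basis (Fin n) F L) := by
  have : Finite (Module.Basis (Fin n) F L) := DFunLike.finite _
  refine Nat.card_le_card_of_injective (transformBasis b) fun g g' h => ?_
  refine Units.ext (ext_mulVec_repr b fun a => ?_)
  rw [← transformBasis_repr, ← transformBasis_repr, h]

lemma basis_eq_of_leftMulMatrix_eq {b b' : Module.Basis (Fin n) F L} {l : L}
    (hspan : Submodule.span F (Set.range fun k : ℕ => l ^ k) = ⊤)
    (hmat : Algebra.leftMulMatrix b l = Algebra.leftMulMatrix b' l)
    (hone : b.repr 1 = b'.repr 1) : b = b' := by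
  suffices (b.repr : L →ₗ[F] Fin n →₀ F) = b'.repr from
    Module.Basis.repr_injective (LinearEquiv.toLinearMap_injective this)
  refine LinearMap.ext_on hspan ?_
  rintro _ ⟨k, rfl⟩
  induction k with
  | zero => simpa using hone
  | succ k ih =>
    have h (b : Module.Basis (Fin n) F L) := Algebra.leftMulMatrix_mulVec_repr b l (l ^ k)
    refine DFunLike.coe_injective ?_
    simp only [LinearEquiv.coe_coe, pow_succ'] at ih ⊢
    rw [← h b, ← h b', hmat, ih]

variable (L) in
/-- `x` is the matrix, in some basis of `L`, of the multiplication by a near-generator of `Lˣ`. -/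
def IsTorusElement (x : Matrix (Fin n) (Fin n) F) : Prop :=
  ∃ (b : Module.Basis (Fin n) F L) (l : Lˣ),
    IsNearGenerator F l ∧ Algebra.leftMulMatrix b (l : L) = x

lemma IsTorusElement.conj {x : Matrix (Fin n) (Fin n) F} (hx : IsTorusElement L x)
    (g : GL (Fin n) F) : IsTorusElement L (g.1 * x * (g⁻¹).1) := by
  obtain ⟨b, l, hl, rfl⟩ := hx
  exact ⟨transformBasis b g, l, hl, leftMulMatrix_transformBasis b g l⟩

lemma aeval_charpoly_leftMulMatrix (b : Module.Basis (Fin n) F L) (l : L) :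
    Polynomial.aeval l (Algebra.leftMulMatrix b l).charpoly = 0 := by
  refine Algebra.leftMulMatrix_injective b ?_
  rw [map_zero, ← Polynomial.aeval_algHom_apply, Matrix.aeval_self_charpoly]

lemma card_basis_mul_card_isNearGenerator_le [Finite L] :
    Nat.card (Module.Basis (Fin n) F L) *
        {l : Lˣ | Algebra.norm F (l : L) = 1 ∧ IsNearGenerator F l}.ncard ≤
      n * Nat.card F ^ n *
        {x : SpecialLinearGroup (Fin n) F | IsTorusElement L x.1}.ncard := by
  classical
  have : Finite F := .of_injective _ (algebraMap F L).injective
  have := Fintype.ofFinite F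
  set Λ := {l : Lˣ | Algebra.norm F (l : L) = 1 ∧ IsNearGenerator F l}
  set X := {x : SpecialLinearGroup (Fin n) F | IsTorusElement L x.1}
  let mat (p : Module.Basis (Fin n) F L × Λ) : X :=
    ⟨⟨Algebra.leftMulMatrix p.1 (p.2.1 : L), by
      rw [← Algebra.norm_eq_matrix_det]; exact p.2.2.1⟩, p.1, p.2, p.2.2.2, rfl⟩
  rw [← Nat.card_coe_set_eq Λ, ← Nat.card_coe_set_eq X, ← Nat.card_prod]
  refine card_le_mul_card_of_fiber_card_le mat (fun p => ((p.2.1 : L), ⇑(p.1.repr 1)))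
    (fun x => (x.1.1.charpoly.aroots L).toFinset ×ˢ Finset.univ) (fun x => ?_)
    (fun p => ?_) fun p p' hmat hdata => ?_
  · rw [Finset.card_product, Finset.card_univ, Fintype.card_fun, Fintype.card_fin,
      ← Nat.card_eq_fintype_card]
    gcongr
    refine (Multiset.toFinset_card_le _).trans ((Polynomial.card_roots' _).trans ?_)
    rw [Polynomial.natDegree_map, Matrix.charpoly_natDegree_eq_dim, Fintype.card_fin]
  · simp only [Finset.mem_product, Multiset.mem_toFinset, Finset.mem_univ, and_true]
    exact (Polynomial.mem_aroots.2 ⟨(Matrix.charpoly_monic _).ne_zero,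
      aeval_charpoly_leftMulMatrix p.1 _⟩)
  · obtain ⟨b, l⟩ := p
    obtain ⟨b', l'⟩ := p'
    obtain ⟨hl, hone⟩ := Prod.mk.inj hdata
    obtain rfl : l = l' := Subtype.ext (Units.ext hl)
    have hmat' : Algebra.leftMulMatrix b (l.1 : L) = Algebra.leftMulMatrix b' (l.1 : L) :=
      congrArg (fun x : X => x.1.1) hmat
    rw [basis_eq_of_leftMulMatrix_eq l.2.2.span_range_pow_eq_top hmat'
      (DFunLike.coe_injective hone)]

lemma card_specialLinearGroup_le_four_mul_card_isTorusElement [Finite L] (hn : 0 < n)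
    (hrank : Module.finrank F L = n)
    (hcard : Nat.card F ^ (n - 1) ≤
      2 * {l : Lˣ | Algebra.norm F (l : L) = 1 ∧ IsNearGenerator F l}.ncard) :
    Nat.card (SpecialLinearGroup (Fin n) F) ≤
      4 * n * {x : SpecialLinearGroup (Fin n) F | IsTorusElement L x.1}.ncard := by
  have : Finite F := .of_injective _ (algebraMap F L).injective
  have : FiniteDimensional F L := .of_finite
  have : Nonempty (Fin n) := ⟨⟨0, hn⟩⟩
  have hq : 1 < Nat.card F := Finite.one_lt_card
  have hbasis := card_generalLinearGroup_le_card_basis (Module.finBasisOfFinrankEq F L hrank)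
  rw [card_generalLinearGroup_eq, Nat.card_units] at hbasis
  set N := {l : Lˣ | Algebra.norm F (l : L) = 1 ∧ IsNearGenerator F l}.ncard
  set X := {x : SpecialLinearGroup (Fin n) F | IsTorusElement L x.1}.ncard
  set q := Nat.card F
  refine Nat.le_of_mul_le_mul_left (c := q ^ n) ?_ (by positivity)
  calc q ^ n * Nat.card (SpecialLinearGroup (Fin n) F)
      = q * q ^ (n - 1) * Nat.card (SpecialLinearGroup (Fin n) F) := by
        rw [← pow_succ', Nat.sub_add_cancel hn]
    _ ≤ 2 * (q - 1) * (2 * N) * Nat.card (SpecialLinearGroup (Fin n) F) := by gcongr; omega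
    _ = 4 * ((q - 1) * Nat.card (SpecialLinearGroup (Fin n) F) * N) := by ring
    _ ≤ 4 * (n * q ^ n * X) := Nat.mul_le_mul_left 4
        ((Nat.mul_le_mul_right N hbasis).trans card_basis_mul_card_isNearGenerator_le)
    _ = q ^ n * (4 * n * X) := by ring

end TorusElements

section Generation

/-- The `Fˣ`-multiples of the elements of `H`. -/
def scalarMultiples {ι F : Type*} [Fintype ι] [DecidableEq ι] [Field F]
    (H : Subgroup (SpecialLinearGroup ι F)) : Submonoid (Matrix ι ι F) where
  carrier := {y | ∃ c : Fˣ, ∃ h ∈ H, (c : F) • (h : Matrix ι ι F) = y}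
  one_mem' := ⟨1, 1, H.one_mem, by simp⟩
  mul_mem' := by
    rintro _ _ ⟨c, h, hh, rfl⟩ ⟨c', h', hh', rfl⟩
    exact ⟨c * c', h * h', H.mul_mem hh hh', by simp [smul_smul, mul_comm]⟩

section ScalarMultiples

variable {ι F : Type*} [Fintype ι] [DecidableEq ι] [Field F]
  {H : Subgroup (SpecialLinearGroup ι F)}

lemma coe_mem_scalarMultiples {h : SpecialLinearGroup ι F} (hh : h ∈ H) :
    (h : Matrix ι ι F) ∈ scalarMultiples H :=
  ⟨1, h, hh, one_smul F _⟩

lemma smul_mem_scalarMultiples (c : Fˣ) {y : Matrix ι ι F} (hy : y ∈ scalarMultiples H) :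
    (c : F) • y ∈ scalarMultiples H := by
  obtain ⟨c', h, hh, rfl⟩ := hy
  exact ⟨c * c', h, hh, by rw [Units.val_mul, mul_smul]⟩

lemma card_scalarMultiples_le [Finite F] :
    Nat.card (scalarMultiples H) ≤ Nat.card Fˣ * Nat.card H := by
  rw [← Nat.card_prod]
  refine Nat.card_le_card_of_surjective
    (fun p : Fˣ × H => ⟨(p.1 : F) • (p.2.1 : Matrix ι ι F), p.1, p.2.1, p.2.2, rfl⟩) ?_
  rintro ⟨_, c, h, hh, rfl⟩
  exact ⟨(c, ⟨h, hh⟩), rfl⟩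

lemma card_scalarPowers_le_ncard {L : Type*} [Field L] [Finite L] [Algebra F L]
    {b : Module.Basis ι F L} {l : Lˣ} (hl : Algebra.leftMulMatrix b (l : L) ∈ scalarMultiples H) :
    Nat.card (scalarPowers F l) ≤
      {a : L | Algebra.leftMulMatrix b a ∈ scalarMultiples H}.ncard := by
  rw [← Nat.card_coe_set_eq]
  refine Nat.card_le_card_of_injective (fun u => ⟨(u.1 : L), ?_⟩) fun u u' h =>
    Subtype.ext (Units.ext (congrArg Subtype.val h))
  obtain ⟨c, k, hu⟩ := exists_coe_eq_smul_pow_of_mem_scalarPowers u.2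
  rw [Set.mem_ofPred_eq, hu, map_smul, map_pow]
  exact smul_mem_scalarMultiples c (pow_mem hl k)

end ScalarMultiples

lemma pow_four_le_of_mul_le {q m d B I T s : ℕ} (hq : 0 < q) (hT : 0 < T)
    (hd : T * q ≤ B * (d + 1)) (hs : (d + 1) ^ m ≤ s) (hI : s * I ≤ q ^ m)
    (hB : B ^ (4 * m) ≤ q * T ^ (4 * m)) : I ^ 4 ≤ q := by
  have hIT : I * T ^ m ≤ B ^ m := by
    refine Nat.le_of_mul_le_mul_right (c := q ^ m) ?_ (by positivity)
    calc I * T ^ m * q ^ m = I * (T * q) ^ m := by rw [mul_pow]; ring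
      _ ≤ I * (B * (d + 1)) ^ m := by gcongr
      _ = B ^ m * ((d + 1) ^ m * I) := by rw [mul_pow]; ring
      _ ≤ B ^ m * (s * I) := by gcongr
      _ ≤ B ^ m * q ^ m := by gcongr
  refine Nat.le_of_mul_le_mul_right (c := T ^ (4 * m)) ?_ (by positivity)
  calc I ^ 4 * T ^ (4 * m) = (I * T ^ m) ^ 4 := by ring
    _ ≤ (B ^ m) ^ 4 := by gcongr
    _ = B ^ (4 * m) := by ring
    _ ≤ q * T ^ (4 * m) := hB

variable {n : ℕ} {F L : Type*} [Field F] [Field L] [Algebra F L]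

/-- The condition imposed on the second generator: `x` has an eigenvector over `F`, and `x ^ n!` is
cyclic. The power `n!` fixes every point when `x` permutes a set of at most `n` elements. -/
structure IsCyclicWithEigenvector (x : Matrix (Fin n) (Fin n) F) : Prop where
  exists_eigenvector : ∃ v ≠ 0, ∃ μ : F, x *ᵥ v = μ • v
  isCyclicMatrix_pow : IsCyclicMatrix (x ^ n.factorial)

lemma IsCyclicWithEigenvector.conj {x : Matrix (Fin n) (Fin n) F} (hx : IsCyclicWithEigenvector x)
    (g : GL (Fin n) F) : IsCyclicWithEigenvector (g.1 * x * (g⁻¹).1) where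
  exists_eigenvector := by
    obtain ⟨v, hv, μ, hμ⟩ := hx.exists_eigenvector
    refine ⟨g.1 *ᵥ v, fun h => hv ?_, μ, ?_⟩
    · rw [← Matrix.one_mulVec v, ← Units.inv_mul g, ← Matrix.mulVec_mulVec, h, Matrix.mulVec_zero]
    · rw [Matrix.mulVec_mulVec, Matrix.mul_assoc, Units.inv_mul, Matrix.mul_one,
        ← Matrix.mulVec_mulVec, hμ, Matrix.mulVec_smul]
  isCyclicMatrix_pow := by
    rw [Units.conj_pow]
    exact hx.isCyclicMatrix_pow.conj (Units.inv_mul g)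

theorem eq_top_of_isTorusElement_of_isCyclicWithEigenvector [Finite L] (hn : 0 < n)
    (hq : 100 ≤ Nat.card F) {H : Subgroup (SpecialLinearGroup (Fin n) F)}
    {x₁ x₂ : SpecialLinearGroup (Fin n) F} (hx₁ : x₁ ∈ H) (hx₂ : x₂ ∈ H)
    (htorus : IsTorusElement L x₁.1) (hcyclic : IsCyclicWithEigenvector x₂.1) : H = ⊤ := by
  have : Finite F := .of_injective _ (algebraMap F L).injective
  have : Nonempty (Fin n) := ⟨⟨0, hn⟩⟩
  obtain ⟨b, l, hl, hbl⟩ := htorus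
  obtain ⟨v, hv, μ, hμ⟩ := hcyclic.exists_eigenvector
  have hT := card_scalarPowers_le_ncard (hbl ▸ coe_mem_scalarMultiples hx₁)
  rw [IsNearGenerator, Module.finrank_eq_card_basis b, Fintype.card_fin] at hl
  set q := Nat.card F
  set T := Nat.card (scalarPowers F l)
  have hT₀ : 0 < T := Nat.card_pos
  have hB₀ : 0 < n ^ 2 * q ^ n := by positivity
  obtain ⟨d, hd, hd'⟩ :
      ∃ d, n ^ 2 * d * q ^ n < T * q ∧ T * q ≤ n ^ 2 * q ^ n * (d + 1) := by
    have hTq : 0 < T * q := by positivity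
    have hle := Nat.mul_div_le (T * q - 1) (n ^ 2 * q ^ n)
    have hlt := Nat.lt_mul_div_succ (T * q - 1) hB₀
    exact ⟨(T * q - 1) / (n ^ 2 * q ^ n), by rw [mul_right_comm]; omega, Nat.le_of_pred_lt hlt⟩
  have hcard := add_one_pow_sq_le_card_of_eigenvector (hd.trans_le (Nat.mul_le_mul_right q hT))
    (coe_mem_scalarMultiples hx₂) (coe_mem_scalarMultiples (H.inv_mem hx₂))
    (congrArg Subtype.val (mul_inv_cancel x₂)) hv hμ hcyclic.isCyclicMatrix_pow
  have hindex : Nat.card Fˣ * Nat.card H * H.index ≤ q ^ n ^ 2 := by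
    rw [mul_assoc, Subgroup.card_mul_index]
    simpa using card_units_mul_card_specialLinearGroup_le (F := F) (ι := Fin n)
  exact eq_top_of_index_pow_four_le H hq (pow_four_le_of_mul_le (by omega) hT₀ hd'
    (hcard.trans card_scalarMultiples_le) hindex hl)

theorem invGen_of_isTorusElement_of_isCyclicWithEigenvector [Finite L] (hn : 0 < n)
    (hq : 100 ≤ Nat.card F) {x₁ x₂ : SpecialLinearGroup (Fin n) F}
    (hx₁ : IsTorusElement L x₁.1) (hx₂ : IsCyclicWithEigenvector x₂.1) : InvGen x₁ x₂ := by
  intro g h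
  refine eq_top_of_isTorusElement_of_isCyclicWithEigenvector (L := L) hn hq
    (Subgroup.subset_closure (Set.mem_insert _ _))
    (Subgroup.subset_closure (Set.mem_insert_of_mem _ rfl)) ?_ ?_
  · exact hx₁.conj (g : GL (Fin n) F)
  · exact hx₂.conj (h : GL (Fin n) F)

end Generation

section Counting

variable {n : ℕ} {F : Type*} [Field F]

lemma card_specialLinearGroup_le_four_mul_card_isCyclicWithEigenvector [Finite F] (hn : 0 < n)
    (hq : 4 * (n * (n * (n.factorial * n)) * 2 ^ n) ≤ Nat.card F) :
    Nat.card (SpecialLinearGroup (Fin n) F) ≤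
      4 * {x : SpecialLinearGroup (Fin n) F | IsCyclicWithEigenvector x.1}.ncard := by
  have : Nonempty (Fin n) := ⟨⟨0, hn⟩⟩
  have hev := card_specialLinearGroup_le_two_mul_card_exists_eigenvector (ι := Fin n) (F := F)
  have hnoncyclic := card_not_isCyclicMatrix_pow_specialLinearGroup_mul_card_le (F := F) hn
    n.factorial_pos
  set E := {x : SpecialLinearGroup (Fin n) F | ∃ v ≠ 0, ∃ μ : F, x.1 *ᵥ v = μ • v}
  set N := {x : SpecialLinearGroup (Fin n) F | ¬ IsCyclicMatrix (x.1 ^ n.factorial)}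
  set X := {x : SpecialLinearGroup (Fin n) F | IsCyclicWithEigenvector x.1}
  have hN : 4 * N.ncard ≤ Nat.card (SpecialLinearGroup (Fin n) F) := by
    refine Nat.le_of_mul_le_mul_right (c := Nat.card F) ?_ Nat.card_pos
    calc 4 * N.ncard * Nat.card F
        ≤ 4 * (n * (n * (n.factorial * n)) * 2 ^ n *
          Nat.card (SpecialLinearGroup (Fin n) F)) := by
          rw [mul_assoc]
          exact Nat.mul_le_mul_left 4 hnoncyclic
      _ = 4 * (n * (n * (n.factorial * n)) * 2 ^ n) *
          Nat.card (SpecialLinearGroup (Fin n) F) := by ring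
      _ ≤ Nat.card (SpecialLinearGroup (Fin n) F) * Nat.card F := by
          rw [mul_comm (Nat.card (SpecialLinearGroup (Fin n) F))]
          exact Nat.mul_le_mul_right _ hq
  have hsub : E ⊆ X ∪ N := fun x hx =>
    (em (IsCyclicMatrix (x.1 ^ n.factorial))).imp (fun h => ⟨hx, h⟩) id
  have hle : E.ncard ≤ X.ncard + N.ncard := (Set.ncard_le_ncard hsub).trans (Set.ncard_union_le _ _)
  omega

theorem exists_card_specialLinearGroup_sq_le_mul_card_invGen (hn : 0 < n) :
    ∃ q₀ : ℕ, ∀ (F : Type*) [Field F] [Finite F], q₀ ≤ Nat.card F →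
      Nat.card (SpecialLinearGroup (Fin n) F) ^ 2 ≤ 16 * n *
        Nat.card {p : SpecialLinearGroup (Fin n) F × SpecialLinearGroup (Fin n) F //
          InvGen p.1 p.2} := by
  obtain ⟨q₁, hq₁⟩ := exists_card_pow_pred_le_two_mul_card_isNearGenerator hn
  refine ⟨q₁ + 4 * (n * (n * (n.factorial * n)) * 2 ^ n) + 100, fun F _ _ hq => ?_⟩
  have : NeZero n := ⟨hn.ne'⟩
  obtain ⟨p, _⟩ := CharP.exists F
  have : Fact p.Prime := ⟨CharP.char_is_prime F p⟩
  let L := FiniteField.Extension F p n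
  have hrank : Module.finrank F L = n := FiniteField.finrank_extension F p n
  have : Finite L := Module.finite_of_finite F
  let X₁ := {x : SpecialLinearGroup (Fin n) F | IsTorusElement L x.1}
  let X₂ := {x : SpecialLinearGroup (Fin n) F | IsCyclicWithEigenvector x.1}
  have hX₁ : Nat.card (SpecialLinearGroup (Fin n) F) ≤ 4 * n * X₁.ncard :=
    card_specialLinearGroup_le_four_mul_card_isTorusElement hn hrank (hq₁ F L hrank (by omega))
  have hX₂ : Nat.card (SpecialLinearGroup (Fin n) F) ≤ 4 * X₂.ncard :=
    card_specialLinearGroup_le_four_mul_card_isCyclicWithEigenvector hn (by omega)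
  calc Nat.card (SpecialLinearGroup (Fin n) F) ^ 2 ≤ 4 * n * X₁.ncard * (4 * X₂.ncard) := by
        rw [sq]; exact Nat.mul_le_mul hX₁ hX₂
    _ = 16 * n * (X₁ ×ˢ X₂).ncard := by rw [Set.ncard_prod]; ring
    _ ≤ 16 * n * {p : SpecialLinearGroup (Fin n) F × SpecialLinearGroup (Fin n) F |
        InvGen p.1 p.2}.ncard := by
        gcongr
        · exact Set.toFinite _
        · exact fun p hp =>
            invGen_of_isTorusElement_of_isCyclicWithEigenvector hn (by omega) hp.1 hp.2

end Counting

theorem stmt_8 :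
    ∃ c : ℝ, 0 < c ∧
      ∀ n : ℕ, 2 ≤ n →
        ∃ C : ℝ, 0 < C ∧
          ∀ (F : Type) [Field F] [Fintype F],
            (Nat.card {p : Matrix.SpecialLinearGroup (Fin n) F ×
                Matrix.SpecialLinearGroup (Fin n) F // InvGen p.1 p.2} : ℝ) ≥
              (c / n - C / Fintype.card F) *
                (Nat.card (Matrix.SpecialLinearGroup (Fin n) F) : ℝ) ^ 2 := by
  refine ⟨1 / 16, by norm_num, fun n hn => ?_⟩
  have hn' : (1 / 16 : ℝ) / n ≤ 1 := by
    rw [div_le_one (by positivity)]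
    exact (by norm_num : (1 / 16 : ℝ) ≤ 2).trans (mod_cast hn)
  obtain ⟨q₀, hq₀⟩ := exists_card_specialLinearGroup_sq_le_mul_card_invGen (n := n) (by omega)
  refine ⟨q₀ + 1, by positivity, fun F _ _ => ?_⟩
  have hq : (0 : ℝ) < Fintype.card F := mod_cast Fintype.card_pos
  rcases le_total q₀ (Fintype.card F) with hle | hle
  · have hcount := hq₀ F (hle.trans_eq Nat.card_eq_fintype_card.symm)
    calc _ ≤ (1 / 16 : ℝ) / n * (Nat.card (SpecialLinearGroup (Fin n) F) : ℝ) ^ 2 := by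
          gcongr
          exact sub_le_self _ (by positivity)
      _ ≤ _ := by
          rw [div_div, one_div_mul_eq_div, div_le_iff₀' (by positivity)]
          exact_mod_cast hcount
  · have hC : 1 ≤ (q₀ + 1 : ℝ) / Fintype.card F := by
      rw [one_le_div hq]
      exact (Nat.cast_le.2 hle).trans (le_add_of_nonneg_right zero_le_one)
    exact (mul_nonpos_of_nonpos_of_nonneg (by linarith) (sq_nonneg _)).trans (Nat.cast_nonneg _)
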